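/- Let S be a quasi-hereditary algebra with Ringel dual S'. For every λ ∈ Λ⁺, the Δ-filtration dimension of the costandard module ∇(λ) of S equals the projective dimension of the standard module Δ'(λ) of S': wfd(∇(λ)) = proj(Δ'(λ)). -/

import Mathlib

/-!
Common definitions for formalizing "On the global and ∇-filtration dimensions of
quasi-hereditary algebras" by Erdmann and Parker.

We work with a finite-dimensional algebra `S` over a field `k`; since `S` is
finite dimensional over `k`, the finite-dimensional `S`-modules are exactly the
finitely generated ones, so we express finite-dimensionality of a module `M` as
`Module.Finite S M`.
-/

open CategoryTheory

namespace QHPaper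

variable (S : Type) [Ring S]

/-- The subquotient `B ⧸ A` associated to two submodules `A B` of `M`. -/
abbrev subquot {M : ModuleCat.{0} S} (A B : Submodule S ↥M) : Type :=
  ↥B ⧸ (Submodule.comap B.subtype A)

/-- A filtration `⊥ = f 0 ≤ f 1 ≤ ⋯ ≤ f n = ⊤` of `M` whose `i`-th section
`f (i+1) / f i` is isomorphic to the prescribed module `D i`. -/
def HasFiltrationWithSections (M : ModuleCat.{0} S) (n : ℕ)
    (f : Fin (n + 1) → Submodule S ↥M) (D : Fin n → ModuleCat.{0} S) : Prop :=
  Monotone f ∧ f 0 = ⊥ ∧ f (Fin.last n) = ⊤ ∧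
    ∀ i : Fin n, Nonempty ((subquot S (f i.castSucc) (f i.succ)) ≃ₗ[S] ↥(D i))

/-- `L` occurs as a (simple) subquotient of `M`; for `L` simple this says that `L`
is a composition factor of `M`. -/
def IsCompFactor (L M : ModuleCat.{0} S) : Prop :=
  ∃ (A B : Submodule S ↥M), A ≤ B ∧ Nonempty ((subquot S A B) ≃ₗ[S] ↥L)

/-- `L` occurs with multiplicity `m` among the sections of a composition series of `M`. -/
def CompFactorMult (L M : ModuleCat.{0} S) (m : ℕ) : Prop :=
  ∃ (n : ℕ) (f : Fin (n + 1) → Submodule S ↥M),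
    Monotone f ∧ f 0 = ⊥ ∧ f (Fin.last n) = ⊤ ∧
    (∀ i : Fin n, IsSimpleModule S (subquot S (f i.castSucc) (f i.succ))) ∧
    Nat.card {i : Fin n // Nonempty ((subquot S (f i.castSucc) (f i.succ)) ≃ₗ[S] ↥L)} = m

/-- `P` is a projective cover of `M`: `P` is projective and there is a surjection
`P → M` whose kernel is superfluous in `P`. -/
def IsProjCover (P M : ModuleCat.{0} S) : Prop :=
  Module.Projective S ↥P ∧ ∃ π : ↥P →ₗ[S] ↥M, Function.Surjective π ∧
    ∀ N : Submodule S ↥P, N ⊔ LinearMap.ker π = ⊤ → N = ⊤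

/-- `I` is an injective hull of `M`: `I` is injective and there is an injection
`M → I` with essential image. -/
def IsInjHull (I M : ModuleCat.{0} S) : Prop :=
  Module.Injective S ↥I ∧ ∃ ι : ↥M →ₗ[S] ↥I, Function.Injective ι ∧
    ∀ N : Submodule S ↥I, N ⊓ LinearMap.range ι = ⊥ → N = ⊥

/-- The data of a quasi-hereditary algebra structure on `S` with weight poset `Λ`:
a full set `L` of pairwise non-isomorphic simple modules, their projective covers `P`
and injective hulls `I`, the standard modules `std` (largest quotient of `P lam` with
all composition factors `L mu`, `mu ≤ lam`), the costandard modules `costd`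
(largest submodule of `I lam` with all composition factors `L mu`, `mu ≤ lam`),
such that `L lam` occurs exactly once in `std lam` and `P lam` is filtered by
standard modules `std mu` with `mu ≥ lam`, with `std lam` occurring exactly once. -/
structure QHData (Λ : Type) [Fintype Λ] [PartialOrder Λ] where
  L : Λ → ModuleCat.{0} S
  P : Λ → ModuleCat.{0} S
  I : Λ → ModuleCat.{0} S
  std : Λ → ModuleCat.{0} S
  costd : Λ → ModuleCat.{0} S
  finiteL : ∀ lam, Module.Finite S ↥(L lam)
  simpleL : ∀ lam, IsSimpleModule S ↥(L lam)
  nonisoL : ∀ lam mu, lam ≠ mu → IsEmpty (↥(L lam) ≃ₗ[S] ↥(L mu))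
  fullL : ∀ M : ModuleCat.{0} S, IsSimpleModule S ↥M → ∃ lam, Nonempty (↥M ≃ₗ[S] ↥(L lam))
  projCover : ∀ lam, IsProjCover S (P lam) (L lam)
  injHull : ∀ lam, IsInjHull S (I lam) (L lam)
  stdSpec : ∀ lam, ∃ K : Submodule S ↥(P lam),
    Nonempty (↥(std lam) ≃ₗ[S] (↥(P lam) ⧸ K)) ∧
    (∀ mu, IsCompFactor S (L mu) (ModuleCat.of S (↥(P lam) ⧸ K)) → mu ≤ lam) ∧
    ∀ K' : Submodule S ↥(P lam),
      (∀ mu, IsCompFactor S (L mu) (ModuleCat.of S (↥(P lam) ⧸ K')) → mu ≤ lam) → K ≤ K'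
  costdSpec : ∀ lam, ∃ V : Submodule S ↥(I lam),
    Nonempty (↥(costd lam) ≃ₗ[S] ↥V) ∧
    (∀ mu, IsCompFactor S (L mu) (ModuleCat.of S ↥V) → mu ≤ lam) ∧
    ∀ V' : Submodule S ↥(I lam),
      (∀ mu, IsCompFactor S (L mu) (ModuleCat.of S ↥V') → mu ≤ lam) → V' ≤ V
  multOne : ∀ lam, CompFactorMult S (L lam) (std lam) 1
  projFilt : ∀ lam, ∃ (n : ℕ) (f : Fin (n + 1) → Submodule S ↥(P lam)) (g : Fin n → Λ),
    HasFiltrationWithSections S (P lam) n f (fun i => std (g i)) ∧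
    (∀ i, lam ≤ g i) ∧ Nat.card {i : Fin n // g i = lam} = 1

variable {Λ : Type} [Fintype Λ] [PartialOrder Λ]

/-- `M` has a filtration with costandard sections, i.e. `M ∈ F(∇)`. -/
def InCostdFilt (Q : QHData S Λ) (M : ModuleCat.{0} S) : Prop :=
  ∃ (n : ℕ) (f : Fin (n + 1) → Submodule S ↥M) (g : Fin n → Λ),
    HasFiltrationWithSections S M n f (fun i => Q.costd (g i))

/-- `M` has a filtration with standard sections, i.e. `M ∈ F(Δ)`. -/
def InStdFilt (Q : QHData S Λ) (M : ModuleCat.{0} S) : Prop :=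
  ∃ (n : ℕ) (f : Fin (n + 1) → Submodule S ↥M) (g : Fin n → Λ),
    HasFiltrationWithSections S M n f (fun i => Q.std (g i))

/-- `0 → N 0 → N 1 → ⋯ → N (n+1) → 0` is exact. -/
def IsExactSeq (n : ℕ) (N : Fin (n + 2) → ModuleCat.{0} S)
    (f : ∀ i : Fin (n + 1), ↥(N i.castSucc) →ₗ[S] ↥(N i.succ)) : Prop :=
  Function.Injective (f 0) ∧ Function.Surjective (f (Fin.last n)) ∧
    ∀ i : Fin n, LinearMap.range (f i.castSucc) = LinearMap.ker (f i.succ)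

/-- `M` has a ∇-resolution (co-resolution by modules in `F(∇)`) of length `d`:
`0 → M → M₀ → ⋯ → M_d → 0` with each `Mᵢ ∈ F(∇)`. -/
def GfdLE (Q : QHData S Λ) (M : ModuleCat.{0} S) (d : ℕ) : Prop :=
  ∃ (N : Fin (d + 2) → ModuleCat.{0} S)
    (f : ∀ i : Fin (d + 1), ↥(N i.castSucc) →ₗ[S] ↥(N i.succ)),
    IsExactSeq S d N f ∧ N 0 = M ∧ ∀ i : Fin (d + 1), InCostdFilt S Q (N i.succ)

/-- The ∇-filtration dimension (good filtration dimension) of a module. -/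
noncomputable def gfd (Q : QHData S Λ) (M : ModuleCat.{0} S) : ℕ :=
  sInf {d | GfdLE S Q M d}

/-- `M` has a resolution `0 → M_d → ⋯ → M₀ → M → 0` with each `Mᵢ ∈ F(Δ)`. -/
def WfdLE (Q : QHData S Λ) (M : ModuleCat.{0} S) (d : ℕ) : Prop :=
  ∃ (N : Fin (d + 2) → ModuleCat.{0} S)
    (f : ∀ i : Fin (d + 1), ↥(N i.castSucc) →ₗ[S] ↥(N i.succ)),
    IsExactSeq S d N f ∧ N (Fin.last (d + 1)) = M ∧
    ∀ i : Fin (d + 1), InStdFilt S Q (N i.castSucc)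

/-- The Δ-filtration dimension of a module. -/
noncomputable def wfd (Q : QHData S Λ) (M : ModuleCat.{0} S) : ℕ :=
  sInf {d | WfdLE S Q M d}

/-- `M` has a projective resolution of length `d`. -/
def ProjdimLE (M : ModuleCat.{0} S) (d : ℕ) : Prop :=
  ∃ (N : Fin (d + 2) → ModuleCat.{0} S)
    (f : ∀ i : Fin (d + 1), ↥(N i.castSucc) →ₗ[S] ↥(N i.succ)),
    IsExactSeq S d N f ∧ N (Fin.last (d + 1)) = M ∧
    ∀ i : Fin (d + 1), Module.Projective S ↥(N i.castSucc)

/-- The projective dimension of a module. -/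
noncomputable def projdim (M : ModuleCat.{0} S) : ℕ :=
  sInf {d | ProjdimLE S M d}

/-- `M` has an injective resolution of length `d`. -/
def InjdimLE (M : ModuleCat.{0} S) (d : ℕ) : Prop :=
  ∃ (N : Fin (d + 2) → ModuleCat.{0} S)
    (f : ∀ i : Fin (d + 1), ↥(N i.castSucc) →ₗ[S] ↥(N i.succ)),
    IsExactSeq S d N f ∧ N 0 = M ∧
    ∀ i : Fin (d + 1), Module.Injective S ↥(N i.succ)

/-- The injective dimension of a module. -/
noncomputable def injdim (M : ModuleCat.{0} S) : ℕ :=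
  sInf {d | InjdimLE S M d}

/-- `gfd(S)`: the supremum of the ∇-filtration dimensions of all
finite-dimensional `S`-modules. -/
noncomputable def gfdAlg (Q : QHData S Λ) : ℕ :=
  sSup {d | ∃ M : ModuleCat.{0} S, Module.Finite S ↥M ∧ gfd S Q M = d}

/-- `wfd(S)`: the supremum of the Δ-filtration dimensions of all
finite-dimensional `S`-modules. -/
noncomputable def wfdAlg (Q : QHData S Λ) : ℕ :=
  sSup {d | ∃ M : ModuleCat.{0} S, Module.Finite S ↥M ∧ wfd S Q M = d}

/-- The global dimension of `S`: the supremum of the projective dimensions of all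
finite-dimensional `S`-modules. -/
noncomputable def globdim : ℕ :=
  sSup {d | ∃ M : ModuleCat.{0} S, Module.Finite S ↥M ∧ projdim S M = d}

/-- `Ext^n_S(A, B) ≠ 0`. -/
noncomputable def extNe (A B : ModuleCat.{0} S) (n : ℕ) : Prop :=
  Nontrivial ↥(((Ext ℤ (ModuleCat.{0} S) n).obj (Opposite.op A)).obj B)

/-- A simple-preserving duality on `S`: a contravariant, exact, fully faithful,
additive self-functor `D` on the category of finite-dimensional `S`-modules with
`D (D M) ≅ M` and `D (L lam) ≅ L lam` for all `lam`. -/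
structure Duality (Q : QHData S Λ) where
  D : ModuleCat.{0} S → ModuleCat.{0} S
  Dmap : ∀ {A B : ModuleCat.{0} S}, (↥A →ₗ[S] ↥B) → (↥(D B) →ₗ[S] ↥(D A))
  finD : ∀ M : ModuleCat.{0} S, Module.Finite S ↥M → Module.Finite S ↥(D M)
  Did : ∀ A : ModuleCat.{0} S, Module.Finite S ↥A →
    Dmap (LinearMap.id : ↥A →ₗ[S] ↥A) = LinearMap.id
  Dcomp : ∀ {A B C : ModuleCat.{0} S}, Module.Finite S ↥A → Module.Finite S ↥B →
    Module.Finite S ↥C → ∀ (f : ↥A →ₗ[S] ↥B) (g : ↥B →ₗ[S] ↥C),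
      Dmap (g ∘ₗ f) = Dmap f ∘ₗ Dmap g
  Dadd : ∀ {A B : ModuleCat.{0} S}, Module.Finite S ↥A → Module.Finite S ↥B →
    ∀ (f g : ↥A →ₗ[S] ↥B), Dmap (f + g) = Dmap f + Dmap g
  Dfull : ∀ {A B : ModuleCat.{0} S}, Module.Finite S ↥A → Module.Finite S ↥B →
    Function.Bijective (fun f : ↥A →ₗ[S] ↥B => Dmap f)
  Dexact : ∀ {A B C : ModuleCat.{0} S}, Module.Finite S ↥A → Module.Finite S ↥B →
    Module.Finite S ↥C → ∀ (f : ↥A →ₗ[S] ↥B) (g : ↥B →ₗ[S] ↥C),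
      Function.Injective f → Function.Surjective g →
      LinearMap.range f = LinearMap.ker g →
      Function.Injective (Dmap g) ∧ Function.Surjective (Dmap f) ∧
        LinearMap.range (Dmap g) = LinearMap.ker (Dmap f)
  Dinvol : ∀ M : ModuleCat.{0} S, Module.Finite S ↥M → Nonempty (↥(D (D M)) ≃ₗ[S] ↥M)
  DL : ∀ lam, Nonempty (↥(D (Q.L lam)) ≃ₗ[S] ↥(Q.L lam))

/-- Strong property A: `mu < lam` implies `gfd (L mu) < gfd (L lam)`. -/
def StrongPropA (Q : QHData S Λ) : Prop :=
  ∀ mu lam : Λ, mu < lam → gfd S Q (Q.L mu) < gfd S Q (Q.L lam)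

/-- Property A: `mu < lam` implies `gfd (L mu) ≤ gfd (L lam)`. -/
def PropA (Q : QHData S Λ) : Prop :=
  ∀ mu lam : Λ, mu < lam → gfd S Q (Q.L mu) ≤ gfd S Q (Q.L lam)

/-- Property B: `mu < lam` implies `wfd (∇ mu) ≤ wfd (∇ lam)`. -/
def PropB (Q : QHData S Λ) : Prop :=
  ∀ mu lam : Λ, mu < lam → wfd S Q (Q.costd mu) ≤ wfd S Q (Q.costd lam)

/-- Property C: `wfd (∇ lam) = gfd S - inj (∇ lam)` for all `lam`. -/
def PropC (Q : QHData S Λ) : Prop :=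
  ∀ lam : Λ, wfd S Q (Q.costd lam) = gfdAlg S Q - injdim S (Q.costd lam)

/-- Property D: `wfd (∇ lam) = wfd (L lam)` for all `lam`. -/
def PropD (Q : QHData S Λ) : Prop :=
  ∀ lam : Λ, wfd S Q (Q.costd lam) = wfd S Q (Q.L lam)

/-- Property E: `mu < lam` implies `inj (∇ mu) ≥ inj (∇ lam)`. -/
def PropE (Q : QHData S Λ) : Prop :=
  ∀ mu lam : Λ, mu < lam → injdim S (Q.costd lam) ≤ injdim S (Q.costd mu)

/-- The partial order is minimal for the quasi-hereditary structure: whenever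
`mu < lam` are adjacent, `L mu` is a composition factor of `Δ lam` or of `∇ lam`. -/
def MinimalOrder (Q : QHData S Λ) : Prop :=
  ∀ mu lam : Λ, mu < lam → (¬ ∃ nu, mu < nu ∧ nu < lam) →
    IsCompFactor S (Q.L mu) (Q.std lam) ∨ IsCompFactor S (Q.L mu) (Q.costd lam)

/-- `S` is connected (indecomposable as an algebra, i.e. one block): the only
central idempotents are `0` and `1`. -/
def ConnectedRing : Prop :=
  ∀ c : S, c * c = c → (∀ s : S, c * s = s * c) → c = 0 ∨ c = 1

/-- A tilting module: a module in `F(Δ) ∩ F(∇)`. -/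
def IsTilting (Q : QHData S Λ) (T : ModuleCat.{0} S) : Prop :=
  InStdFilt S Q T ∧ InCostdFilt S Q T

/-- The indecomposable tilting module `T(lam)`: an indecomposable tilting module in
which `L lam` occurs exactly once and all other composition factors `L mu` have
`mu < lam`. -/
def IsIndecTilting (Q : QHData S Λ) (lam : Λ) (T : ModuleCat.{0} S) : Prop :=
  IsTilting S Q T ∧ Nontrivial ↥T ∧
    (∀ A B : Submodule S ↥T, IsCompl A B → A = ⊥ ∨ B = ⊥) ∧
    CompFactorMult S (Q.L lam) T 1 ∧
    ∀ mu, IsCompFactor S (Q.L mu) T → mu = lam ∨ mu < lam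

/-- A full tilting module: a (finite-dimensional) tilting module having every
indecomposable tilting module as a direct summand. -/
def IsFullTilting (Q : QHData S Λ) (T : ModuleCat.{0} S) : Prop :=
  IsTilting S Q T ∧ Module.Finite S ↥T ∧
    ∀ (lam : Λ) (Tl : ModuleCat.{0} S), IsIndecTilting S Q lam Tl →
      ∃ Cc : ModuleCat.{0} S, Nonempty (↥T ≃ₗ[S] (↥Tl × ↥Cc))

/-- The Ringel dual ring `S' = End_S(T)^op`. -/
abbrev RingelDualRing (T : ModuleCat.{0} S) : Type := (Module.End S ↥T)ᵐᵒᵖ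

/-- `Hom_S(T, X)` is a module over `S' = End_S(T)^op` via `f • φ = φ ∘ f`. -/
instance homTModule (T X : ModuleCat.{0} S) :
    Module (RingelDualRing S T) (↥T →ₗ[S] ↥X) where
  smul a φ := φ ∘ₗ a.unop
  one_smul φ := rfl
  mul_smul a b φ := rfl
  smul_zero a := rfl
  smul_add a φ ψ := rfl
  add_smul a b φ := by
    ext x
    show φ ((a.unop + b.unop) x) = φ (a.unop x) + φ (b.unop x)
    rw [LinearMap.add_apply, map_add]
  zero_smul φ := by
    ext x
    show φ ((0 : Module.End S ↥T) x) = 0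
    rw [LinearMap.zero_apply, map_zero]

/-- The `S'`-module `Hom_S(T, X)`, i.e. the image of `X` under the functor
`F = Hom_S(T, -)`. -/
noncomputable def homTMod (T X : ModuleCat.{0} S) :
    ModuleCat.{0} (RingelDualRing S T) :=
  ModuleCat.of (RingelDualRing S T) (↥T →ₗ[S] ↥X)

/-- `Q'` is a Ringel dual quasi-hereditary structure for `(Q, T)`:
`T` is a full tilting module, `Q'` is a quasi-hereditary structure on
`S' = End_S(T)^op` for the opposite poset, and its standard modules are
`Δ'(lam) = Hom_S(T, ∇(lam))`. -/
def IsRingelDualData (Q : QHData S Λ) (T : ModuleCat.{0} S)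
    (Q' : QHData (RingelDualRing S T) Λᵒᵈ) : Prop :=
  IsFullTilting S Q T ∧
    ∀ lam : Λ, Nonempty
      (↥(Q'.std (OrderDual.toDual lam)) ≃ₗ[RingelDualRing S T]
        (↥T →ₗ[S] ↥(Q.costd lam)))

/-- `0 → T_d → ⋯ → T_0 → M → 0` exact with all `T_i` tilting modules. -/
def TiltResLE (Q : QHData S Λ) (M : ModuleCat.{0} S) (d : ℕ) : Prop :=
  ∃ (N : Fin (d + 2) → ModuleCat.{0} S)
    (f : ∀ i : Fin (d + 1), ↥(N i.castSucc) →ₗ[S] ↥(N i.succ)),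
    IsExactSeq S d N f ∧ N (Fin.last (d + 1)) = M ∧
    ∀ i : Fin (d + 1), IsTilting S Q (N i.castSucc)

/-- An idempotent `e` is primitive if it is nonzero and is not the sum of two
nonzero orthogonal idempotents. -/
def IsPrimitiveIdempotent (e : S) : Prop :=
  e * e = e ∧ e ≠ 0 ∧ ∀ a b : S, a * a = a → b * b = b → a * b = 0 → b * a = 0 →
    e = a + b → a = 0 ∨ b = 0

/-- The additive subgroup `e•M = {m | e • m = m}` of `M` (for `e` idempotent). -/
def cornerSet (eG : S) (M : ModuleCat.{0} S) : AddSubgroup ↥M where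
  carrier := {m | eG • m = m}
  add_mem' := by
    intro a b ha hb
    simp only [Set.mem_setOf_eq] at *
    rw [smul_add, ha, hb]
  zero_mem' := by
    simp only [Set.mem_setOf_eq]
    rw [smul_zero]
  neg_mem' := by
    intro a ha
    simp only [Set.mem_setOf_eq] at *
    rw [smul_neg, ha]

/-- The `R`-module structure on `e•M`, where `ι : R → S` identifies `R` with the
corner ring `eSe` (as a non-unital ring, with `ι 1 = e`). -/
def cornerModuleStructure (R : Type) [Ring R] (ι : R →ₙ+* S) (eG : S)
    (hone : ι 1 = eG) (hrange : ∀ r : R, eG * ι r * eG = ι r)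
    (M : ModuleCat.{0} S) : Module R ↥(cornerSet S eG M) where
  smul r m := ⟨ι r • (m : ↥M), by
    have hm : eG • (m : ↥M) = (m : ↥M) := m.2
    show eG • (ι r • (m : ↥M)) = ι r • (m : ↥M)
    have h : eG • (ι r • (m : ↥M)) = (eG * ι r * eG) • (m : ↥M) := by
      rw [mul_assoc, mul_smul, mul_smul, hm]
    rw [h, hrange]⟩
  one_smul m := by
    apply Subtype.ext
    show ι 1 • (m : ↥M) = (m : ↥M)
    rw [hone]
    exact m.2
  mul_smul r s m := by
    apply Subtype.ext
    show ι (r * s) • (m : ↥M) = ι r • (ι s • (m : ↥M))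
    rw [map_mul, mul_smul]
  smul_zero r := by
    apply Subtype.ext
    show ι r • (0 : ↥M) = 0
    rw [smul_zero]
  smul_add r m n := by
    apply Subtype.ext
    show ι r • ((m : ↥M) + (n : ↥M)) = ι r • (m : ↥M) + ι r • (n : ↥M)
    rw [smul_add]
  add_smul r s m := by
    apply Subtype.ext
    show ι (r + s) • (m : ↥M) = ι r • (m : ↥M) + ι s • (m : ↥M)
    rw [map_add, add_smul]
  zero_smul m := by
    apply Subtype.ext
    show ι 0 • (m : ↥M) = 0
    rw [map_zero, zero_smul]

/-- The `R`-module `e•M`, where `R ≅ eSe` via `ι`. -/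
noncomputable def cornerMod (R : Type) [Ring R] (ι : R →ₙ+* S) (eG : S)
    (hone : ι 1 = eG) (hrange : ∀ r : R, eG * ι r * eG = ι r)
    (M : ModuleCat.{0} S) : ModuleCat.{0} R :=
  @ModuleCat.of R _ ↥(cornerSet S eG M) _
    (cornerModuleStructure S R ι eG hone hrange M)

end QHPaper

open CategoryTheory

namespace QHProof
open QHPaper CategoryTheory.Abelian

section VanSec
variable {S : Type} [Ring S]

/-- `Ext^n(X,Y) = 0`. -/
def Van (n : ℕ) (X Y : ModuleCat.{0} S) : Prop := ∀ x : Ext.{0} X Y n, x = 0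

/-- `0 → A → B → C → 0` is exact. -/
structure SES {A B C : ModuleCat.{0} S} (f : ↥A →ₗ[S] ↥B) (g : ↥B →ₗ[S] ↥C) : Prop where
  inj : Function.Injective f
  surj : Function.Surjective g
  ex : ∀ x, g x = 0 ↔ ∃ y, f y = x

variable {A B C : ModuleCat.{0} S} {f : ↥A →ₗ[S] ↥B} {g : ↥B →ₗ[S] ↥C}

theorem SES.comp_zero (h : SES f g) (x : A) : g (f x) = 0 := (h.ex _).2 ⟨x, rfl⟩

/-- the short complex -/
abbrev SES.sc (h : SES f g) : ShortComplex (ModuleCat.{0} S) :=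
  ShortComplex.mk (ModuleCat.ofHom f) (ModuleCat.ofHom g) (by
    ext x; simpa using h.comp_zero x)

theorem SES.se (h : SES f g) : h.sc.ShortExact where
  exact := by
    rw [ShortComplex.moduleCat_exact_iff]
    intro x hx
    exact (h.ex x).1 hx
  mono_f := (ModuleCat.mono_iff_injective _).2 h.inj
  epi_g := (ModuleCat.epi_iff_surjective _).2 h.surj

theorem SES.van_mid_cov (h : SES f g) {n : ℕ} {X : ModuleCat.{0} S}
    (h1 : Van n X A) (h3 : Van n X C) : Van n X B := by
  intro x
  obtain ⟨y, hy⟩ := Ext.covariant_sequence_exact₂ X h.se x (h3 _)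
  rw [← hy, h1 y, Ext.zero_comp]

theorem SES.van_mid_con (h : SES f g) {n : ℕ} {Y : ModuleCat.{0} S}
    (h1 : Van n A Y) (h3 : Van n C Y) : Van n B Y := by
  intro x
  obtain ⟨y, hy⟩ := Ext.contravariant_sequence_exact₂ h.se Y x (h1 _)
  rw [← hy, h3 y, Ext.comp_zero]

theorem SES.van_left_con (h : SES f g) {n : ℕ} {Y : ModuleCat.{0} S}
    (h2 : Van n B Y) (h3 : Van (n+1) C Y) : Van n A Y := by
  intro x
  obtain ⟨y, hy⟩ := Ext.contravariant_sequence_exact₁ h.se Y x (add_comm 1 n) (h3 _)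
  rw [← hy, h2 y, Ext.comp_zero]

theorem SES.van_right_con (h : SES f g) {n : ℕ} {Y : ModuleCat.{0} S}
    (h1 : Van n A Y) (h2 : Van (n+1) B Y) : Van (n+1) C Y := by
  intro x
  obtain ⟨y, hy⟩ := Ext.contravariant_sequence_exact₃ h.se Y x (h2 _) (add_comm 1 n)
  rw [← hy, h1 y, Ext.comp_zero]

theorem SES.van_right_cov (h : SES f g) {n : ℕ} {X : ModuleCat.{0} S}
    (h2 : Van n X B) (h1 : Van (n+1) X A) : Van n X C := by
  intro x
  obtain ⟨y, hy⟩ := Ext.covariant_sequence_exact₃ X h.se x rfl (h1 _)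
  rw [← hy, h2 y, Ext.zero_comp]

theorem SES.van_left_cov (h : SES f g) {n : ℕ} {X : ModuleCat.{0} S}
    (h3 : Van n X C) (h2 : Van (n+1) X B) : Van (n+1) X A := by
  intro x
  obtain ⟨y, hy⟩ := Ext.covariant_sequence_exact₁ X h.se x (h2 _) rfl
  rw [← hy, h3 y, Ext.zero_comp]

theorem SES.van_right_con1 (h : SES f g) {Y : ModuleCat.{0} S}
    (h1 : ∀ u : ↥A →ₗ[S] ↥Y, ∃ v : ↥B →ₗ[S] ↥Y, v ∘ₗ f = u) (h2 : Van 1 B Y) : Van 1 C Y := by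
  intro x
  obtain ⟨y, hy⟩ := Ext.contravariant_sequence_exact₃ h.se Y x (h2 _) (add_zero 1)
  obtain ⟨u, rfl⟩ := Ext.homEquiv₀.symm.surjective y
  obtain ⟨v, hv⟩ := h1 u.hom
  rw [← hy]
  have hu : u = h.sc.f ≫ ModuleCat.ofHom v := by
    ext x; exact (LinearMap.congr_fun hv x).symm
  simp only [Ext.homEquiv₀_symm_apply]
  rw [hu, ← Ext.mk₀_comp_mk₀]
  exact h.se.extClass_comp_assoc _

theorem SES.van_left_cov1 (h : SES f g) {X : ModuleCat.{0} S}
    (h1 : ∀ u : ↥X →ₗ[S] ↥C, ∃ v : ↥X →ₗ[S] ↥B, g ∘ₗ v = u) (h2 : Van 1 X B) : Van 1 X A := by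
  intro x
  obtain ⟨y, hy⟩ := Ext.covariant_sequence_exact₁ X h.se x (h2 _) (zero_add 1)
  obtain ⟨u, rfl⟩ := Ext.homEquiv₀.symm.surjective y
  obtain ⟨v, hv⟩ := h1 u.hom
  rw [← hy]
  have hu : u = ModuleCat.ofHom v ≫ h.sc.g := by
    ext x; exact (LinearMap.congr_fun hv x).symm
  simp only [Ext.homEquiv₀_symm_apply]
  rw [hu, ← Ext.mk₀_comp_mk₀]
  rw [Ext.comp_assoc (a₁₂ := 0) (a₂₃ := 1) (a := 1) _ _ _ (by omega) (by omega) (by omega)]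
  rw [h.se.comp_extClass, Ext.comp_zero]

theorem SES.lift (h : SES f g) {X : ModuleCat.{0} S} (h1 : Van 1 X A)
    (u : ↥X →ₗ[S] ↥C) : ∃ v : ↥X →ₗ[S] ↥B, g ∘ₗ v = u := by
  obtain ⟨y, hy⟩ := Ext.covariant_sequence_exact₃ X h.se (Ext.mk₀ (ModuleCat.ofHom u)) (zero_add 1) (h1 _)
  obtain ⟨v, rfl⟩ := Ext.homEquiv₀.symm.surjective y
  simp only [Ext.homEquiv₀_symm_apply, Ext.mk₀_comp_mk₀] at hy
  have := Ext.homEquiv₀.symm.injective hy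
  refine ⟨v.hom, ?_⟩
  ext x
  exact congrArg (fun (t : X ⟶ C) => t.hom x) this

theorem SES.extend (h : SES f g) {Y : ModuleCat.{0} S} (h1 : Van 1 C Y)
    (u : ↥A →ₗ[S] ↥Y) : ∃ v : ↥B →ₗ[S] ↥Y, v ∘ₗ f = u := by
  obtain ⟨y, hy⟩ := Ext.contravariant_sequence_exact₁ h.se Y (Ext.mk₀ (ModuleCat.ofHom u)) (add_zero 1) (h1 _)
  obtain ⟨v, rfl⟩ := Ext.homEquiv₀.symm.surjective y
  simp only [Ext.homEquiv₀_symm_apply, Ext.mk₀_comp_mk₀] at hy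
  have := Ext.homEquiv₀.symm.injective hy
  refine ⟨v.hom, ?_⟩
  ext x
  exact congrArg (fun (t : A ⟶ Y) => t.hom x) this

theorem Van.retract_left {n : ℕ} {X Z Y : ModuleCat.{0} S} (i : ↥X →ₗ[S] ↥Z) (r : ↥Z →ₗ[S] ↥X)
    (h : ∀ x, r (i x) = x) (hZ : Van n Z Y) : Van n X Y := by
  intro x
  have h1 : (Ext.mk₀ (ModuleCat.ofHom i)).comp ((Ext.mk₀ (ModuleCat.ofHom r)).comp x (zero_add n))
      (zero_add n) = x := by
    rw [Ext.mk₀_comp_mk₀_assoc]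
    have : ModuleCat.ofHom i ≫ ModuleCat.ofHom r = 𝟙 X := by
      ext x; exact h x
    rw [this, Ext.mk₀_id_comp]
  rw [← h1, hZ (Ext.comp _ _ _), Ext.comp_zero]

theorem Van.retract_right {n : ℕ} {X Z Y : ModuleCat.{0} S} (i : ↥X →ₗ[S] ↥Z) (r : ↥Z →ₗ[S] ↥X)
    (h : ∀ x, r (i x) = x) (hZ : Van n Y Z) : Van n Y X := by
  intro x
  have h1 : (x.comp (Ext.mk₀ (ModuleCat.ofHom i)) (add_zero n)).comp
      (Ext.mk₀ (ModuleCat.ofHom r)) (add_zero n) = x := by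
    rw [Ext.comp_assoc_of_second_deg_zero, Ext.mk₀_comp_mk₀]
    have : ModuleCat.ofHom i ≫ ModuleCat.ofHom r = 𝟙 X := by
      ext x; exact h x
    rw [this, Ext.comp_mk₀_id]
  rw [← h1, hZ (Ext.comp _ _ _), Ext.zero_comp]

theorem Van.of_equiv_left {n : ℕ} {X Z Y : ModuleCat.{0} S} (e : ↥X ≃ₗ[S] ↥Z)
    (hZ : Van n Z Y) : Van n X Y :=
  Van.retract_left e.toLinearMap e.symm.toLinearMap (by simp) hZ

theorem Van.of_equiv_right {n : ℕ} {X Z Y : ModuleCat.{0} S} (e : ↥X ≃ₗ[S] ↥Z)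
    (hZ : Van n Y Z) : Van n Y X :=
  Van.retract_right e.toLinearMap e.symm.toLinearMap (by simp) hZ

theorem Van.of_sub_left {n : ℕ} {X Y : ModuleCat.{0} S} [Subsingleton X] : Van n X Y := by
  intro x
  have : (𝟙 X) = 0 := by ext x; exact Subsingleton.elim _ _
  rw [← x.mk₀_id_comp, this, Ext.mk₀_zero, Ext.zero_comp]

theorem Van.of_sub_right {n : ℕ} {X Y : ModuleCat.{0} S} [Subsingleton Y] : Van n X Y := by
  intro x
  have : (𝟙 Y) = 0 := by ext x; exact Subsingleton.elim _ _
  rw [← x.comp_mk₀_id, this, Ext.mk₀_zero, Ext.comp_zero]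

theorem Van.of_proj {n : ℕ} {X Y : ModuleCat.{0} S} (h : Module.Projective S X) :
    Van (n+1) X Y := by
  intro x
  have : Projective X := (IsProjective.iff_projective _).1 h
  exact Ext.eq_zero_of_projective x

theorem Van.of_inj {n : ℕ} {X Y : ModuleCat.{0} S} (h : Module.Injective S Y) :
    Van (n+1) X Y := by
  intro x
  have : Injective Y := (Module.injective_iff_injective_object S Y).1 h
  exact Ext.eq_zero_of_injective x

theorem proj_of_van {X : ModuleCat.{0} S} (h : ∀ Y, Van 1 X Y) : Module.Projective S X := by
  have : Projective X := projective_iff_subsingleton_ext_one.2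
    (fun Y => ⟨fun a b => by rw [h Y a, h Y b]⟩)
  exact (IsProjective.iff_projective _).2 this

/-- basic short exact sequences -/
theorem ses_sub {M : ModuleCat.{0} S} (N : Submodule S ↥M) :
    SES (A := ModuleCat.of S N) (B := M) (C := ModuleCat.of S (↥M ⧸ N)) N.subtype N.mkQ where
  inj := N.injective_subtype
  surj := N.mkQ_surjective
  ex x := by simp [Submodule.Quotient.mk_eq_zero]

theorem ses_ker {M N : ModuleCat.{0} S} (p : ↥M →ₗ[S] ↥N) (hp : Function.Surjective p) :
    SES (A := ModuleCat.of S (LinearMap.ker p)) (B := M) (C := N) (LinearMap.ker p).subtype p where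
  inj := Submodule.injective_subtype _
  surj := hp
  ex x := by simp

theorem ses_coker {M N : ModuleCat.{0} S} (p : ↥M →ₗ[S] ↥N) (hp : Function.Injective p) :
    SES (A := M) (B := N) (C := ModuleCat.of S (↥N ⧸ LinearMap.range p)) p
      (LinearMap.range p).mkQ where
  inj := hp
  surj := Submodule.mkQ_surjective _
  ex x := by simp [Submodule.Quotient.mk_eq_zero]

theorem ses_prod (M N : ModuleCat.{0} S) :
    SES (A := M) (B := ModuleCat.of S (↥M × ↥N)) (C := N) (LinearMap.inl S M N)
      (LinearMap.snd S M N) where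
  inj := LinearMap.inl_injective
  surj := LinearMap.snd_surjective
  ex x := by
    constructor
    · intro h; exact ⟨x.1, Prod.ext rfl h.symm⟩
    · rintro ⟨y, rfl⟩; rfl

theorem SES.equiv_right (h : SES f g) {C' : ModuleCat.{0} S} (e : ↥C ≃ₗ[S] ↥C') :
    SES (A := A) (B := B) (C := C') f (e.toLinearMap ∘ₗ g) where
  inj := h.inj
  surj := e.surjective.comp h.surj
  ex x := by simpa using h.ex x

theorem SES.equiv_left (h : SES f g) {A' : ModuleCat.{0} S} (e : ↥A' ≃ₗ[S] ↥A) :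
    SES (A := A') (B := B) (C := C) (f ∘ₗ e.toLinearMap) g where
  inj := h.inj.comp e.injective
  surj := h.surj
  ex x := by
    rw [h.ex x]
    constructor
    · rintro ⟨y, rfl⟩; exact ⟨e.symm y, by simp⟩
    · rintro ⟨y, rfl⟩; exact ⟨e y, rfl⟩

theorem SES.equiv_mid (h : SES f g) {B' : ModuleCat.{0} S} (e : ↥B' ≃ₗ[S] ↥B) :
    SES (A := A) (B := B') (C := C) (e.symm.toLinearMap ∘ₗ f) (g ∘ₗ e.toLinearMap) where
  inj := e.symm.injective.comp h.inj
  surj := h.surj.comp e.surjective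
  ex x := by
    have := h.ex (e x)
    simp only [LinearMap.comp_apply, LinearEquiv.coe_coe]
    rw [this]
    constructor
    · rintro ⟨y, hy⟩; exact ⟨y, by rw [hy]; simp⟩
    · rintro ⟨y, hy⟩; exact ⟨y, by rw [← hy]; simp⟩

end VanSec
end QHProof

open CategoryTheory

namespace QHProof
open QHPaper CategoryTheory.Abelian

section FiltSec
variable {S : Type} [Ring S]

theorem ses_subquot {M : ModuleCat.{0} S} (A B : Submodule S ↥M) (h : A ≤ B) :
    SES (A := ModuleCat.of S A) (B := ModuleCat.of S B) (C := ModuleCat.of S (subquot S A B))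
      (Submodule.inclusion h) (Submodule.mkQ _) where
  inj := Submodule.inclusion_injective h
  surj := Submodule.mkQ_surjective _
  ex x := by
    simp only [Submodule.mkQ_apply, Submodule.Quotient.mk_eq_zero, Submodule.mem_comap]
    constructor
    · intro hx; exact ⟨⟨x.1, hx⟩, rfl⟩
    · rintro ⟨y, rfl⟩; exact y.2

/-- filtration by members of a family -/
def Filt {ι : Type} (D : ι → ModuleCat.{0} S) (M : ModuleCat.{0} S) : Prop :=
  ∃ (n : ℕ) (f : Fin (n + 1) → Submodule S ↥M) (g : Fin n → ι),
    HasFiltrationWithSections S M n f (fun i => D (g i))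

theorem filt_partial {M : ModuleCat.{0} S} {n : ℕ} {f : Fin (n + 1) → Submodule S ↥M}
    {D : Fin n → ModuleCat.{0} S} (H : HasFiltrationWithSections S M n f D)
    (Pr : ModuleCat.{0} S → Prop) (zero : ∀ M : ModuleCat.{0} S, Subsingleton M → Pr M)
    (j : ℕ) (hj : j < n + 1)
    (step : ∀ i : Fin n, (i : ℕ) < j → ∀ (A B : ModuleCat.{0} S) (a : ↥A →ₗ[S] ↥B)
      (b : ↥B →ₗ[S] ↥(D i)), SES a b → Pr A → Pr B) :
    Pr (ModuleCat.of S (f ⟨j, hj⟩)) := by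
  induction j with
  | zero =>
    apply zero
    have : f ⟨0, hj⟩ = ⊥ := H.2.1
    rw [this]
    exact inferInstanceAs (Subsingleton (⊥ : Submodule S ↥M))
  | succ j ih =>
    have ih' := ih (by omega) (fun i hi => step i (by omega))
    let i : Fin n := ⟨j, by omega⟩
    obtain ⟨e⟩ := H.2.2.2 i
    exact step i (Nat.lt_succ_self j) _ _ _ _
      ((ses_subquot (f i.castSucc) (f i.succ) (H.1 (Fin.castSucc_lt_succ.le))).equiv_right
        (C' := D i) e) ih'

theorem top_ses {M : ModuleCat.{0} S} {n : ℕ} {f : Fin (n + 1 + 1) → Submodule S ↥M}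
    {D : Fin (n + 1) → ModuleCat.{0} S} (H : HasFiltrationWithSections S M (n + 1) f D) :
    ∃ b : ↥M →ₗ[S] ↥(D (Fin.last n)),
      SES (A := ModuleCat.of S (f ⟨n, by omega⟩)) (B := M) (C := D (Fin.last n))
        (Submodule.subtype _) b := by
  obtain ⟨e⟩ := H.2.2.2 (Fin.last n)
  have h1 := (ses_subquot (f (Fin.last n).castSucc) (f (Fin.last n).succ)
    (H.1 (Fin.castSucc_lt_succ.le))).equiv_right (C' := D (Fin.last n)) e
  have ht : f (Fin.last n).succ = ⊤ := H.2.2.1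
  let e2 : ↥M ≃ₗ[S] f (Fin.last n).succ := (LinearEquiv.ofTop _ ht).symm
  exact ⟨_, h1.equiv_mid e2⟩

theorem filt_elim' {M : ModuleCat.{0} S} {n : ℕ} {f : Fin (n + 1) → Submodule S ↥M}
    {D : Fin n → ModuleCat.{0} S} (H : HasFiltrationWithSections S M n f D)
    (Pr : ModuleCat.{0} S → Prop) (zero : ∀ M : ModuleCat.{0} S, Subsingleton M → Pr M)
    (step : ∀ i : Fin n, ∀ (A B : ModuleCat.{0} S) (a : ↥A →ₗ[S] ↥B)
      (b : ↥B →ₗ[S] ↥(D i)), SES a b → Pr A → Pr B) :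
    Pr M := by
  cases n with
  | zero =>
    apply zero
    have h : (⊥ : Submodule S ↥M) = ⊤ := by rw [← H.2.1, ← H.2.2.1]; rfl
    exact (Submodule.subsingleton_iff S).1 (subsingleton_of_bot_eq_top h)
  | succ n =>
    obtain ⟨b, hb⟩ := top_ses H
    exact step _ _ _ _ _ hb (filt_partial H Pr zero n (by omega) (fun i _ => step i))

theorem Filt.elim {ι : Type} {D : ι → ModuleCat.{0} S} {M : ModuleCat.{0} S} (h : Filt D M)
    (Pr : ModuleCat.{0} S → Prop) (zero : ∀ M : ModuleCat.{0} S, Subsingleton M → Pr M)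
    (step : ∀ i, ∀ (A B : ModuleCat.{0} S) (a : ↥A →ₗ[S] ↥B)
      (b : ↥B →ₗ[S] ↥(D i)), SES a b → Pr A → Pr B) :
    Pr M := by
  obtain ⟨n, f, g, H⟩ := h
  exact filt_elim' H Pr zero (fun i => step (g i))

theorem Filt.zero {ι : Type} {D : ι → ModuleCat.{0} S} {M : ModuleCat.{0} S}
    (h : Subsingleton M) : Filt D M := by
  refine ⟨0, fun _ => ⊥, Fin.elim0, fun _ _ _ => le_rfl, rfl, ?_, fun i => i.elim0⟩
  exact Subsingleton.elim _ _

theorem subquot_map_equiv {A B : ModuleCat.{0} S} (a : ↥A →ₗ[S] ↥B) (ha : Function.Injective a)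
    (X Y : Submodule S ↥A) :
    Nonempty (subquot S (X.map a) (Y.map a) ≃ₗ[S] subquot S X Y) := by
  let e := Submodule.equivMapOfInjective a ha Y
  have he : ∀ y, ((e y : Submodule.map a Y) : ↥B) = a y := fun y => rfl
  refine ⟨(Submodule.Quotient.equiv (Submodule.comap Y.subtype X)
    (Submodule.comap (Y.map a).subtype (X.map a)) e ?_).symm⟩
  ext z
  obtain ⟨y, rfl⟩ := e.surjective z
  simp only [Submodule.mem_map, Submodule.mem_comap, Submodule.subtype_apply]
  constructor
  · rintro ⟨x, hx, h⟩
    exact ⟨x, hx, by rw [← h]; rfl⟩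
  · rintro ⟨x, hx, h⟩
    rw [he] at h
    have := ha h
    subst this
    exact ⟨y, hx, rfl⟩

theorem sec_congr {M : ModuleCat.{0} S} {A A' B B' : Submodule S ↥M} {D D' : ModuleCat.{0} S}
    (h1 : A = A') (h2 : B = B') (h3 : D = D') (h : Nonempty (subquot S A' B' ≃ₗ[S] ↥D')) :
    Nonempty (subquot S A B ≃ₗ[S] ↥D) := by
  subst h1 h2 h3; exact h

theorem Filt.snoc {ι : Type} {D : ι → ModuleCat.{0} S} {A B : ModuleCat.{0} S} {i : ι}
    {a : ↥A →ₗ[S] ↥B} {b : ↥B →ₗ[S] ↥(D i)} (hs : SES a b) (h : Filt D A) : Filt D B := by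
  obtain ⟨n, f, g, hm, h0, hl, hsec⟩ := h
  refine ⟨n + 1, Fin.snoc (α := fun _ => Submodule S ↥B) (fun j => (f j).map a) ⊤,
    Fin.snoc (α := fun _ => ι) g i, ?_, ?_, ?_, ?_⟩
  · intro x y hxy
    induction y using Fin.lastCases with
    | last => simp
    | cast y =>
      induction x using Fin.lastCases with
      | last =>
        exact absurd hxy (by simp [Fin.le_def]; omega)
      | cast x =>
        simp only [Fin.snoc_castSucc]
        exact Submodule.map_mono (hm (by simpa using hxy))
  · have : (0 : Fin (n + 2)) = Fin.castSucc 0 := rfl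
    rw [this, Fin.snoc_castSucc, h0, Submodule.map_bot]
  · simp
  · intro j
    induction j using Fin.lastCases with
    | last =>
      refine sec_congr (A' := Submodule.map a ⊤) (B' := ⊤) (D' := D i) (by rw [Fin.snoc_castSucc, hl])
        (by rw [Fin.succ_last, Fin.snoc_last]) (by simp only [Fin.snoc_last]) ?_
      refine ⟨(Submodule.quotEquivOfEq _ _ ?_).trans
        ((b ∘ₗ Submodule.subtype ⊤).quotKerEquivOfSurjective ?_)⟩
      · ext x
        simp only [Submodule.map_top, Submodule.mem_comap, LinearMap.mem_range, LinearMap.mem_ker]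
        exact (hs.ex x.1).symm
      · intro c
        obtain ⟨x, hx⟩ := hs.surj c
        exact ⟨⟨x, trivial⟩, hx⟩
    | cast j =>
      refine sec_congr (A' := Submodule.map a (f j.castSucc)) (B' := Submodule.map a (f j.succ))
        (D' := D (g j)) (by rw [Fin.snoc_castSucc])
        (by rw [Fin.succ_castSucc, Fin.snoc_castSucc]) (by simp only [Fin.snoc_castSucc]) ?_
      obtain ⟨e⟩ := hsec j
      obtain ⟨e'⟩ := subquot_map_equiv a hs.inj (f j.castSucc) (f j.succ)
      exact ⟨e'.trans e⟩

/-- pullback along a submodule: `0 → A → B → C → 0` and `0 → C' → C → D → 0` -/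
theorem SES.pull {A B C C' D : ModuleCat.{0} S} {f : ↥A →ₗ[S] ↥B} {g : ↥B →ₗ[S] ↥C}
    {c : ↥C' →ₗ[S] ↥C} {d : ↥C →ₗ[S] ↥D} (h : SES f g) (h' : SES c d) :
    ∃ (B' : ModuleCat.{0} S) (f' : ↥A →ₗ[S] ↥B') (g' : ↥B' →ₗ[S] ↥C') (b : ↥B' →ₗ[S] ↥B),
      SES f' g' ∧ SES b (d ∘ₗ g) ∧ (∀ x, c (g' x) = g (b x)) ∧ (∀ x, b (f' x) = f x) := by
  have hk : ∀ x : LinearMap.ker (d ∘ₗ g), ∃ y, c y = g x := fun x => (h'.ex _).1 x.2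
  let e : ↥C' ≃ₗ[S] LinearMap.range c := LinearEquiv.ofInjective c h'.inj
  let g1 : LinearMap.ker (d ∘ₗ g) →ₗ[S] LinearMap.range c :=
    LinearMap.codRestrict _ (g ∘ₗ Submodule.subtype _) (fun x => hk x)
  have hc : ∀ x, c (e.symm (g1 x)) = g x := fun x => by
    have := LinearEquiv.ofInjective_apply c (h := h'.inj) (e.symm (g1 x))
    rw [← this]
    change ((e (e.symm (g1 x)) : LinearMap.range c) : ↥C) = g x
    rw [LinearEquiv.apply_symm_apply]; rfl
  refine ⟨ModuleCat.of S (LinearMap.ker (d ∘ₗ g)),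
    LinearMap.codRestrict _ f (fun x => by simp [h.comp_zero]),
    e.symm.toLinearMap ∘ₗ g1, Submodule.subtype _, ⟨?_, ?_, ?_⟩,
    ses_ker _ (h'.surj.comp h.surj), fun x => hc x, fun x => rfl⟩
  · intro x y hxy
    exact h.inj (congrArg Subtype.val hxy)
  · intro y
    obtain ⟨x, hx⟩ := h.surj (c y)
    refine ⟨⟨x, ?_⟩, h'.inj ?_⟩
    · simp [hx, h'.comp_zero]
    · exact (hc _).trans hx
  · intro x
    have h1 : (e.symm.toLinearMap ∘ₗ g1) x = 0 ↔ g x.1 = 0 := by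
      rw [← hc x]
      constructor
      · intro h; erw [h]; simp
      · intro h; exact h'.inj (by rw [map_zero]; exact h)
    rw [h1, h.ex]
    constructor
    · rintro ⟨y, hy⟩; exact ⟨y, Subtype.ext hy⟩
    · rintro ⟨y, hy⟩; exact ⟨y, congrArg Subtype.val hy⟩

theorem Filt.of_equiv {ι : Type} {D : ι → ModuleCat.{0} S} {A B : ModuleCat.{0} S}
    (h : Filt D A) (e : ↥A ≃ₗ[S] ↥B) : Filt D B := by
  revert B
  refine h.elim (fun A => ∀ {B : ModuleCat.{0} S}, (↥A ≃ₗ[S] ↥B) → Filt D B) ?_ ?_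
  · intro M hM B e
    exact Filt.zero e.symm.toEquiv.subsingleton
  · intro i A B a b hs ih B' e
    exact Filt.snoc (hs.equiv_mid e.symm) (ih (LinearEquiv.refl _ _))

theorem Filt.ext {ι : Type} {D : ι → ModuleCat.{0} S} {A B C : ModuleCat.{0} S}
    {a : ↥A →ₗ[S] ↥B} {b : ↥B →ₗ[S] ↥C} (hs : SES a b) (hA : Filt D A) (hC : Filt D C) :
    Filt D B := by
  revert A B
  refine hC.elim (fun C => ∀ {A B : ModuleCat.{0} S} {a : ↥A →ₗ[S] ↥B} {b : ↥B →ₗ[S] ↥C},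
    SES a b → Filt D A → Filt D B) ?_ ?_
  · intro C hC A B a b hs hA
    refine hA.of_equiv (LinearEquiv.ofBijective a ⟨hs.inj, fun x => ?_⟩)
    exact (hs.ex x).1 (Subsingleton.elim _ _)
  · intro i C' C c d h' ih A B a b hs hA
    obtain ⟨B', f', g', b', h1, h2, -, -⟩ := hs.pull h'
    exact Filt.snoc h2 (ih h1 hA)

theorem Filt.single {ι : Type} (D : ι → ModuleCat.{0} S) (i : ι) : Filt D (D i) := by
  refine Filt.snoc (A := ModuleCat.of S PUnit) (i := i) (a := 0) (b := LinearMap.id)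
    ⟨?_, Function.surjective_id, ?_⟩ (Filt.zero (inferInstanceAs (Subsingleton PUnit)))
  · intro x y _; exact Subsingleton.elim (α := PUnit) _ _
  · intro x
    constructor
    · intro h; exact ⟨PUnit.unit, h.symm⟩
    · rintro ⟨y, rfl⟩; rfl

end FiltSec
end QHProof

open CategoryTheory

namespace QHProof
open QHPaper CategoryTheory.Abelian

section FunSec
variable {S : Type} [Ring S]

theorem SES.factor {A B C X : ModuleCat.{0} S} {f : ↥A →ₗ[S] ↥B} {g : ↥B →ₗ[S] ↥C}
    (h : SES f g) (u : ↥X →ₗ[S] ↥B) (hu : ∀ x, g (u x) = 0) :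
    ∃ v : ↥X →ₗ[S] ↥A, f ∘ₗ v = u := by
  let e := LinearEquiv.ofInjective f h.inj
  let u' : ↥X →ₗ[S] LinearMap.range f := LinearMap.codRestrict _ u (fun x => (h.ex _).1 (hu x))
  refine ⟨e.symm.toLinearMap ∘ₗ u', ?_⟩
  ext x
  change ((e (e.symm (u' x)) : LinearMap.range f) : ↥B) = u x
  rw [LinearEquiv.apply_symm_apply]; rfl

theorem SES.desc {A B C Y : ModuleCat.{0} S} {f : ↥A →ₗ[S] ↥B} {g : ↥B →ₗ[S] ↥C}
    (h : SES f g) (u : ↥B →ₗ[S] ↥Y) (hu : ∀ x, u (f x) = 0) :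
    ∃ v : ↥C →ₗ[S] ↥Y, v ∘ₗ g = u := by
  let e := g.quotKerEquivOfSurjective h.surj
  have hk : LinearMap.ker g ≤ LinearMap.ker u := by
    intro x hx
    obtain ⟨y, rfl⟩ := (h.ex x).1 hx
    exact hu y
  refine ⟨(LinearMap.ker g).liftQ u hk ∘ₗ e.symm.toLinearMap, ?_⟩
  ext x
  have : e.symm (g x) = (LinearMap.ker g).mkQ x := by
    rw [LinearEquiv.symm_apply_eq]; rfl
  change (LinearMap.ker g).liftQ u hk (e.symm (g x)) = u x
  rw [this]; rfl

theorem factor_surj {B C Y : ModuleCat.{0} S} (g : ↥B →ₗ[S] ↥C) (hg : Function.Surjective g)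
    (u : ↥B →ₗ[S] ↥Y) (hu : ∀ x, g x = 0 → u x = 0) : ∃ v : ↥C →ₗ[S] ↥Y, v ∘ₗ g = u :=
  (ses_ker g hg).desc u (fun x => hu _ x.2)

/-- the functor `Hom(T,-)` on maps -/
def Fmap (T : ModuleCat.{0} S) {X Y : ModuleCat.{0} S} (h : ↥X →ₗ[S] ↥Y) :
    ↥(homTMod S T X) →ₗ[RingelDualRing S T] ↥(homTMod S T Y) where
  toFun u := h ∘ₗ (u : ↥T →ₗ[S] ↥X)
  map_add' _ _ := LinearMap.comp_add _ _ _
  map_smul' _ _ := rfl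

theorem Fses (T : ModuleCat.{0} S) {A B C : ModuleCat.{0} S} {f : ↥A →ₗ[S] ↥B} {g : ↥B →ₗ[S] ↥C}
    (h : SES f g) (hl : ∀ u : ↥T →ₗ[S] ↥C, ∃ v : ↥T →ₗ[S] ↥B, g ∘ₗ v = u) :
    SES (Fmap T f) (Fmap T g) where
  inj := by
    intro u v huv
    apply LinearMap.ext
    intro x
    exact h.inj (LinearMap.congr_fun huv x)
  surj := hl
  ex u := by
    constructor
    · intro hu
      exact h.factor (X := T) u (fun x => LinearMap.congr_fun hu x)
    · rintro ⟨v, rfl⟩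
      apply LinearMap.ext
      intro x
      exact h.comp_zero _

variable {Λ : Type} [Fintype Λ] [PartialOrder Λ] (Q : QHData S Λ)

/-- `L κ` is a composition factor of `M`, expressed by nonzero homs from `P κ`. -/
def HF (κ : Λ) (M : ModuleCat.{0} S) : Prop := ∃ h : ↥(Q.P κ) →ₗ[S] ↥M, h ≠ 0

theorem Plift (κ : Λ) {B C : ModuleCat.{0} S} {g : ↥B →ₗ[S] ↥C} (hg : Function.Surjective g)
    (u : ↥(Q.P κ) →ₗ[S] ↥C) : ∃ v : ↥(Q.P κ) →ₗ[S] ↥B, g ∘ₗ v = u :=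
  haveI := (Q.projCover κ).1
  Module.projective_lifting_property g u hg

variable {Q}

theorem HF.of_inj {κ : Λ} {A B : ModuleCat.{0} S} {f : ↥A →ₗ[S] ↥B} (hf : Function.Injective f)
    (h : HF Q κ A) : HF Q κ B := by
  obtain ⟨u, hu⟩ := h
  refine ⟨f ∘ₗ u, fun h0 => hu ?_⟩
  ext x
  exact hf (by rw [LinearMap.zero_apply, map_zero]; exact LinearMap.congr_fun h0 x)

theorem HF.of_surj {κ : Λ} {B C : ModuleCat.{0} S} {g : ↥B →ₗ[S] ↥C} (hg : Function.Surjective g)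
    (h : HF Q κ C) : HF Q κ B := by
  obtain ⟨u, hu⟩ := h
  obtain ⟨v, rfl⟩ := Plift Q κ hg u
  exact ⟨v, fun h0 => hu (by rw [h0, LinearMap.comp_zero])⟩

theorem HF.of_equiv {κ : Λ} {A B : ModuleCat.{0} S} (e : ↥A ≃ₗ[S] ↥B)
    (h : HF Q κ A) : HF Q κ B := h.of_inj e.injective

theorem HF.ses {κ : Λ} {A B C : ModuleCat.{0} S} {f : ↥A →ₗ[S] ↥B} {g : ↥B →ₗ[S] ↥C}
    (hs : SES f g) (h : HF Q κ B) : HF Q κ A ∨ HF Q κ C := by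
  obtain ⟨u, hu⟩ := h
  by_cases h0 : g ∘ₗ u = 0
  · obtain ⟨v, rfl⟩ := hs.factor u (LinearMap.congr_fun h0)
    exact Or.inl ⟨v, fun h0 => hu (by rw [h0, LinearMap.comp_zero])⟩
  · exact Or.inr ⟨_, h0⟩

theorem HF.not_sub {κ : Λ} {A : ModuleCat.{0} S} [Subsingleton A] : ¬ HF Q κ A := by
  rintro ⟨u, hu⟩
  exact hu (by ext x; exact Subsingleton.elim _ _)

theorem surj_of_simple {A B : ModuleCat.{0} S} (hB : IsSimpleModule S ↥B) (u : ↥A →ₗ[S] ↥B)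
    (hu : u ≠ 0) : Function.Surjective u := (LinearMap.surjective_or_eq_zero u).resolve_right hu

theorem inj_of_simple {A B : ModuleCat.{0} S} (hB : IsSimpleModule S ↥A) (u : ↥A →ₗ[S] ↥B)
    (hu : u ≠ 0) : Function.Injective u := (LinearMap.injective_or_eq_zero u).resolve_right hu

theorem ker_coatom {A B : ModuleCat.{0} S} (hB : IsSimpleModule S ↥B) (u : ↥A →ₗ[S] ↥B)
    (hu : u ≠ 0) : IsCoatom (LinearMap.ker u) := by
  rw [← isSimpleModule_iff_isCoatom]
  exact IsSimpleModule.congr (u.quotKerEquivOfSurjective (surj_of_simple hB u hu))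

variable (Q) in
theorem exists_pi (κ : Λ) : ∃ π : ↥(Q.P κ) →ₗ[S] ↥(Q.L κ), Function.Surjective π ∧ π ≠ 0 ∧
    ∀ (M : ModuleCat.{0} S) (h : ↥(Q.P κ) →ₗ[S] ↥M), h ≠ 0 → ∃ v : LinearMap.range h →ₗ[S] ↥(Q.L κ),
      ∀ x, v ⟨h x, x, rfl⟩ = π x := by
  obtain ⟨hp, π, hs, hN⟩ := Q.projCover κ
  have hsim := Q.simpleL κ
  have h0 : π ≠ 0 := by
    rintro rfl
    have := IsSimpleModule.nontrivial S ↥(Q.L κ)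
    obtain ⟨x, hx⟩ := exists_ne (0 : ↥(Q.L κ))
    obtain ⟨y, hy⟩ := hs x
    exact hx hy.symm
  refine ⟨π, hs, h0, fun M h hh => ?_⟩
  have hc := ker_coatom hsim π h0
  have hle : LinearMap.ker h ≤ LinearMap.ker π := by
    by_contra hcon
    have : LinearMap.ker h ⊔ LinearMap.ker π = ⊤ := by
      apply hc.2
      exact lt_of_le_of_ne le_sup_right (fun he => hcon (by rw [he]; exact le_sup_left))
    exact hh (LinearMap.ker_eq_top.1 (hN _ this))
  obtain ⟨v, hv⟩ := factor_surj (C := ModuleCat.of S (LinearMap.range h)) (h.rangeRestrict)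
    h.surjective_rangeRestrict π (fun x hx => hle (by
      have := congrArg Subtype.val hx; exact this))
  exact ⟨v, fun x => LinearMap.congr_fun hv x⟩

theorem HF.L_iff {κ μ : Λ} : HF Q κ (Q.L μ) ↔ κ = μ := by
  obtain ⟨π, hs, h0, hv⟩ := exists_pi Q κ
  constructor
  · rintro ⟨h, hh⟩
    obtain ⟨v, hv⟩ := hv _ h hh
    have hsu := surj_of_simple (Q.simpleL μ) h hh
    obtain ⟨w, hw⟩ := factor_surj h hsu π (fun x hx => by
      rw [← hv x]
      have : (⟨h x, x, rfl⟩ : LinearMap.range h) = 0 := Subtype.ext hx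
      rw [this, map_zero])
    by_contra hne
    have hw0 : w ≠ 0 := by rintro rfl; exact h0 hw.symm
    exact (Q.nonisoL μ κ (Ne.symm hne)).false (LinearEquiv.ofBijective w
      ⟨inj_of_simple (Q.simpleL μ) w hw0, surj_of_simple (Q.simpleL κ) w hw0⟩)
  · rintro rfl; exact ⟨π, h0⟩

theorem HF.self (κ : Λ) : HF Q κ (Q.L κ) := HF.L_iff.2 rfl

theorem compFactor_iff {κ : Λ} {M : ModuleCat.{0} S} : IsCompFactor S (Q.L κ) M ↔ HF Q κ M := by
  constructor
  · rintro ⟨A, B, hAB, ⟨e⟩⟩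
    have h1 : HF Q κ (ModuleCat.of S (subquot S A B)) := (HF.self κ).of_equiv e.symm
    exact (h1.of_surj (ses_subquot A B hAB).surj).of_inj (f := B.subtype) B.injective_subtype
  · rintro ⟨h, hh⟩
    obtain ⟨π, hs, h0, hv⟩ := exists_pi Q κ
    obtain ⟨v, hv⟩ := hv _ h hh
    have hvs : Function.Surjective v := fun y => by
      obtain ⟨x, rfl⟩ := hs y
      exact ⟨_, hv x⟩
    refine ⟨(LinearMap.ker v).map (Submodule.subtype _), LinearMap.range h,
      Submodule.map_subtype_le _ _, ⟨(Submodule.quotEquivOfEq _ _ ?_).trans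
        (v.quotKerEquivOfSurjective hvs)⟩⟩
    exact Submodule.comap_map_eq_of_injective (Submodule.injective_subtype _) _

/-! multiplicities -/
variable (Q) in
noncomputable def mu (κ : Λ) (M : ModuleCat.{0} S) : ℕ∞ :=
  Module.length (RingelDualRing S (Q.P κ)) ↥(homTMod S (Q.P κ) M)

theorem mu_ses {κ : Λ} {A B C : ModuleCat.{0} S} {f : ↥A →ₗ[S] ↥B} {g : ↥B →ₗ[S] ↥C}
    (hs : SES f g) : mu Q κ B = mu Q κ A + mu Q κ C := by
  have h := Fses (Q.P κ) hs (Plift Q κ hs.surj)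
  exact Module.length_eq_add_of_exact _ _ h.inj h.surj (fun x => h.ex x)

theorem mu_zero {κ : Λ} {M : ModuleCat.{0} S} : mu Q κ M = 0 ↔ ¬ HF Q κ M := by
  unfold mu HF
  rw [Module.length_eq_zero_iff]
  constructor
  · intro h
    push Not
    intro u
    exact h.elim u (0 : ↥(Q.P κ) →ₗ[S] ↥M)
  · intro h
    push Not at h
    exact ⟨fun a b => (h a).trans (h b).symm⟩

theorem mu_congr {κ : Λ} {A B : ModuleCat.{0} S} (e : ↥A ≃ₗ[S] ↥B) : mu Q κ A = mu Q κ B := by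
  have hs : SES (A := A) (B := B) (C := ModuleCat.of S PUnit) e.toLinearMap 0 :=
    ⟨e.injective, fun x => ⟨0, Subsingleton.elim (α := PUnit) _ _⟩, fun x => by
      simp [e.surjective x]⟩
  have : mu Q κ (ModuleCat.of S PUnit) = 0 := by
    have : Subsingleton (ModuleCat.of S PUnit) := inferInstanceAs (Subsingleton PUnit)
    rw [mu_zero]; exact HF.not_sub
  rw [mu_ses hs, this, add_zero]

theorem mu_self (κ : Λ) : mu Q κ (Q.L κ) = 1 := by
  unfold mu
  rw [Module.length_eq_one_iff, isSimpleModule_iff_toSpanSingleton_surjective]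
  constructor
  · obtain ⟨h, hh⟩ := HF.self (Q := Q) κ
    exact ⟨h, 0, hh⟩
  · intro u hu v
    obtain ⟨a, ha⟩ := Plift Q κ (surj_of_simple (Q.simpleL κ) u hu) v
    exact ⟨MulOpposite.op a, ha⟩

theorem mu_simple (κ : Λ) {M : ModuleCat.{0} S} (hM : IsSimpleModule S ↥M) (c : Prop) [Decidable c]
    (hc : c ↔ Nonempty (↥M ≃ₗ[S] ↥(Q.L κ))) : mu Q κ M = if c then 1 else 0 := by
  split_ifs with h
  · obtain ⟨e⟩ := hc.1 h
    rw [mu_congr e, mu_self]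
  · rw [mu_zero]
    intro hh
    obtain ⟨μ, ⟨e⟩⟩ := Q.fullL M hM
    have := HF.L_iff.1 (hh.of_equiv e)
    subst this
    exact h (hc.2 ⟨e⟩)

theorem mu_of_mult {κ : Λ} {M : ModuleCat.{0} S} {m : ℕ} (h : CompFactorMult S (Q.L κ) M m) :
    mu Q κ M = m := by
  classical
  obtain ⟨n, f, hm, h0, hl, hsim, hcard⟩ := h
  let c : ℕ → ℕ := fun i => if h : i < n then
    (if Nonempty ((subquot S (f (Fin.castSucc ⟨i, h⟩)) (f (Fin.succ ⟨i, h⟩))) ≃ₗ[S] ↥(Q.L κ)) then 1 else 0)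
    else 0
  have key : ∀ j (hj : j < n + 1), mu Q κ (ModuleCat.of S (f ⟨j, hj⟩)) = ((∑ i ∈ Finset.range j, c i : ℕ) : ℕ∞) := by
    intro j
    induction j with
    | zero =>
      intro hj
      have : f ⟨0, hj⟩ = ⊥ := h0
      rw [this]
      have : Subsingleton (ModuleCat.of S (⊥ : Submodule S ↥M)) :=
        inferInstanceAs (Subsingleton (⊥ : Submodule S ↥M))
      rw [mu_zero.2 HF.not_sub]; simp
    | succ j ih =>
      intro hj
      have hjn : j < n := by omega
      let i : Fin n := ⟨j, hjn⟩
      have h1 := mu_ses (Q := Q) (κ := κ)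
        (ses_subquot (f i.castSucc) (f i.succ) (hm (Fin.castSucc_lt_succ.le)))
      have h2 := ih (by omega)
      have h3 := mu_simple (Q := Q) κ (M := ModuleCat.of S (subquot S (f i.castSucc) (f i.succ)))
        (hsim i) _ Iff.rfl
      rw [Finset.sum_range_succ, Nat.cast_add, ← h2]
      have hc : c j = if Nonempty ((subquot S (f i.castSucc) (f i.succ)) ≃ₗ[S] ↥(Q.L κ)) then 1 else 0 := by
        simp only [c, dif_pos hjn]; rfl
      rw [hc, Nat.cast_ite, Nat.cast_one, Nat.cast_zero]
      exact h1.trans (by rw [h3]; rfl)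
  have h1 := key n (by omega)
  have h2 : f ⟨n, by omega⟩ = ⊤ := hl
  rw [h2] at h1
  rw [← mu_congr (A := ModuleCat.of S (⊤ : Submodule S ↥M)) (B := M) Submodule.topEquiv, h1]
  rw [Finset.sum_range, ← hcard, Nat.card_eq_fintype_card, Fintype.card_subtype,
    Finset.card_filter]
  congr 1
  apply Finset.sum_congr rfl
  intro i _
  exact dif_pos i.2

theorem mult_exists {κ : Λ} {M : ModuleCat.{0} S} (h : Filt Q.L M) :
    ∃ m, CompFactorMult S (Q.L κ) M m := by
  obtain ⟨n, f, g, hm, h0, hl, hs⟩ := h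
  exact ⟨_, n, f, hm, h0, hl, fun i => by
    obtain ⟨e⟩ := hs i
    have := Q.simpleL (g i)
    exact IsSimpleModule.congr e, rfl⟩

theorem mult_of_mu {κ : Λ} {M : ModuleCat.{0} S} (h : Filt Q.L M) {m : ℕ} (hm : mu Q κ M = m) :
    CompFactorMult S (Q.L κ) M m := by
  obtain ⟨m', h'⟩ := mult_exists (κ := κ) h
  have := mu_of_mult h'
  rw [hm] at this
  have : m = m' := by exact_mod_cast this
  rwa [this]

variable (Q) in
theorem devissage {M : ModuleCat.{0} S} (hM : IsFiniteLength S ↥M) : Filt Q.L M := by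
  obtain ⟨M', hM', e, rfl⟩ : ∃ (M' : Type) (i1 : AddCommGroup M') (i2 : Module S M'),
    M = ModuleCat.of S M' := ⟨M, inferInstance, inferInstance, rfl⟩
  change IsFiniteLength S M' at hM
  induction hM with
  | of_subsingleton => exact Filt.zero (by assumption)
  | @of_simple_quotient M _ _ N hs _ ih =>
    obtain ⟨κ, ⟨e⟩⟩ := Q.fullL (ModuleCat.of S (M ⧸ N)) hs
    exact Filt.snoc (i := κ) ((ses_sub (M := ModuleCat.of S M) N).equiv_right e) (ih)

end FunSec
end QHProof

open CategoryTheory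

set_option linter.unusedSectionVars false
set_option linter.style.haveILetI false
set_option linter.unusedVariables false

namespace QHProof
open QHPaper CategoryTheory.Abelian

/-- finite dimensional over some field -/
class FDA (S : Type) [Ring S] : Prop where
  out : ∃ (k : Type) (_ : Field k) (_ : Algebra k S), FiniteDimensional k S

instance {S : Type} [Ring S] [h : FDA S] : IsArtinianRing S := by
  obtain ⟨k, _, _, _⟩ := h.out
  exact IsArtinianRing.of_finite k S

section FinSec
variable {S : Type} [Ring S] [FDA S]

/-- finite dimensional modules -/
abbrev FD (M : ModuleCat.{0} S) : Prop := Module.Finite S ↥M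

theorem FD.sub {A B : ModuleCat.{0} S} (h : FD B) {f : ↥A →ₗ[S] ↥B} (hf : Function.Injective f) :
    FD A := Module.Finite.of_injective f hf

theorem FD.quot {A B : ModuleCat.{0} S} (h : FD A) {f : ↥A →ₗ[S] ↥B} (hf : Function.Surjective f) :
    FD B := Module.Finite.of_surjective f hf

theorem FD.ses {A B C : ModuleCat.{0} S} {f : ↥A →ₗ[S] ↥B} {g : ↥B →ₗ[S] ↥C}
    (hs : SES f g) (hA : FD A) (hC : FD C) : FD B := by
  have h1 : Module.Finite S (LinearMap.range f) := inferInstance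
  have h2 : LinearMap.range f = LinearMap.ker g := by
    ext x; exact (hs.ex x).symm
  rw [h2] at h1
  have : Module.Finite S (↥B ⧸ LinearMap.ker g) :=
    Module.Finite.equiv (g.quotKerEquivOfSurjective hs.surj).symm
  exact Module.Finite.of_submodule_quotient (LinearMap.ker g)

theorem FD.len {M : ModuleCat.{0} S} (h : FD M) : IsFiniteLength S ↥M :=
  isFiniteLength_iff_isNoetherian_isArtinian.2 ⟨inferInstance, inferInstance⟩

variable {Λ : Type} [Fintype Λ] [PartialOrder Λ] (Q : QHData S Λ)

theorem FD.ind {M : ModuleCat.{0} S} (h : FD M)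
    (Pr : ModuleCat.{0} S → Prop) (zero : ∀ M : ModuleCat.{0} S, Subsingleton M → Pr M)
    (step : ∀ κ, ∀ (A B : ModuleCat.{0} S) (a : ↥A →ₗ[S] ↥B)
      (b : ↥B →ₗ[S] ↥(Q.L κ)), SES a b → Pr A → Pr B) : Pr M :=
  (devissage Q h.len).elim Pr zero step

theorem exists_L_quot {M : ModuleCat.{0} S} (h : FD M) (hn : Nontrivial M) :
    ∃ κ, ∃ b : ↥M →ₗ[S] ↥(Q.L κ), b ≠ 0 := by
  have : ¬ Subsingleton M := not_subsingleton_iff_nontrivial.2 hn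
  revert this
  refine h.ind Q (fun M => ¬ Subsingleton M → ∃ κ, ∃ b : ↥M →ₗ[S] ↥(Q.L κ), b ≠ 0)
    (fun M h1 h2 => absurd h1 h2) ?_
  intro κ A B a b hs _ _
  refine ⟨κ, b, ?_⟩
  rintro rfl
  have := Q.simpleL κ
  have := IsSimpleModule.nontrivial S ↥(Q.L κ)
  obtain ⟨x, hx⟩ := exists_ne (0 : ↥(Q.L κ))
  obtain ⟨y, hy⟩ := hs.surj x
  exact hx hy.symm

theorem exists_L_sub {M : ModuleCat.{0} S} (h : FD M) (hn : Nontrivial M) :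
    ∃ κ, ∃ b : ↥(Q.L κ) →ₗ[S] ↥M, b ≠ 0 := by
  obtain ⟨N, hN, -⟩ := (eq_bot_or_exists_atom_le (⊤ : Submodule S ↥M)).resolve_left top_ne_bot
  have h1 := isSimpleModule_iff_isAtom.2 hN
  obtain ⟨κ, ⟨e⟩⟩ := Q.fullL (ModuleCat.of S N) h1
  refine ⟨κ, N.subtype ∘ₗ e.symm.toLinearMap, fun h0 => ?_⟩
  have := Q.simpleL κ
  have := IsSimpleModule.nontrivial S ↥(Q.L κ)
  obtain ⟨x, hx⟩ := exists_ne (0 : ↥(Q.L κ))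
  apply hx
  have h2 := LinearMap.congr_fun h0 x
  have h3 : e.symm x = 0 := Subtype.ext h2
  simpa using h3

theorem L_ne (κ : Λ) : ∃ x : ↥(Q.L κ), x ≠ 0 := by
  have := Q.simpleL κ
  have := IsSimpleModule.nontrivial S ↥(Q.L κ)
  exact exists_ne (0 : ↥(Q.L κ))

theorem finP (κ : Λ) : FD (Q.P κ) := by
  obtain ⟨hp, π, hs, hN⟩ := Q.projCover κ
  obtain ⟨y, hy⟩ := L_ne Q κ
  obtain ⟨x, rfl⟩ := hs y
  have h0 : π ≠ 0 := by rintro rfl; exact hy rfl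
  have hc := ker_coatom (Q.simpleL κ) π h0
  have h1 : Submodule.span S {x} ⊔ LinearMap.ker π = ⊤ := by
    apply hc.2
    refine lt_of_le_of_ne le_sup_right (fun he => hy ?_)
    have : x ∈ LinearMap.ker π := by
      rw [he]; exact (le_sup_left : Submodule.span S {x} ≤ _) (Submodule.mem_span_singleton_self x)
    exact this
  have h2 := hN _ h1
  exact ⟨⟨{x}, by simpa using h2⟩⟩

theorem std_spec (lam : Λ) : ∃ q : ↥(Q.P lam) →ₗ[S] ↥(Q.std lam), Function.Surjective q ∧
    (∀ κ, HF Q κ (Q.std lam) → κ ≤ lam) ∧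
    ∀ (M : ModuleCat.{0} S) (h : ↥(Q.P lam) →ₗ[S] ↥M), (∀ κ, HF Q κ M → κ ≤ lam) →
      ∃ v : ↥(Q.std lam) →ₗ[S] ↥M, v ∘ₗ q = h := by
  obtain ⟨K, ⟨e⟩, h1, h2⟩ := Q.stdSpec lam
  refine ⟨e.symm.toLinearMap ∘ₗ K.mkQ, e.symm.surjective.comp K.mkQ_surjective, ?_, ?_⟩
  · intro κ hκ
    exact h1 κ (compFactor_iff.2 (hκ.of_equiv e))
  · intro M h hM
    have h3 : K ≤ LinearMap.ker h := by
      apply h2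
      intro κ hκ
      apply hM
      have := compFactor_iff.1 hκ
      have := this.of_equiv (B := ModuleCat.of S (LinearMap.range h)) h.quotKerEquivRange
      exact this.of_inj (f := Submodule.subtype _) (Submodule.injective_subtype _)
    refine ⟨K.liftQ h h3 ∘ₗ e.toLinearMap, ?_⟩
    ext x; simp

theorem costd_spec (lam : Λ) : ∃ i : ↥(Q.costd lam) →ₗ[S] ↥(Q.I lam), Function.Injective i ∧
    (∀ κ, HF Q κ (Q.costd lam) → κ ≤ lam) ∧
    ∀ (M : ModuleCat.{0} S) (h : ↥M →ₗ[S] ↥(Q.I lam)), (∀ κ, HF Q κ M → κ ≤ lam) →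
      ∃ v : ↥M →ₗ[S] ↥(Q.costd lam), i ∘ₗ v = h := by
  obtain ⟨K, ⟨e⟩, h1, h2⟩ := Q.costdSpec lam
  refine ⟨K.subtype ∘ₗ e.toLinearMap, K.injective_subtype.comp e.injective, ?_, ?_⟩
  · intro κ hκ
    exact h1 κ (compFactor_iff.2 (hκ.of_equiv e))
  · intro M h hM
    have h3 : LinearMap.range h ≤ K := by
      apply h2
      intro κ hκ
      apply hM
      exact (compFactor_iff.1 hκ).of_surj (g := h.rangeRestrict) h.surjective_rangeRestrict
    refine ⟨e.symm.toLinearMap ∘ₗ h.codRestrict K (fun x => h3 ⟨x, rfl⟩), ?_⟩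
    ext x; simp

theorem std_le {κ lam : Λ} (h : HF Q κ (Q.std lam)) : κ ≤ lam := by
  obtain ⟨q, -, h1, -⟩ := std_spec Q lam
  exact h1 κ h

theorem costd_le {κ lam : Λ} (h : HF Q κ (Q.costd lam)) : κ ≤ lam := by
  obtain ⟨q, -, h1, -⟩ := costd_spec Q lam
  exact h1 κ h

theorem finstd (lam : Λ) : FD (Q.std lam) := by
  obtain ⟨q, h, -⟩ := std_spec Q lam
  exact (finP Q lam).quot h

theorem finI (lam : Λ) : FD (Q.I lam) := by
  obtain ⟨k, _, _, _⟩ := FDA.out (S := S)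
  obtain ⟨-, ι, hi, hN⟩ := Q.injHull lam
  letI : Module k ↥(Q.I lam) := Module.compHom _ (algebraMap k S)
  letI : Module k ↥(Q.L lam) := Module.compHom _ (algebraMap k S)
  haveI : IsScalarTower k S ↥(Q.I lam) := ⟨fun a s x => by
    change (a • s) • x = algebraMap k S a • (s • x)
    rw [Algebra.smul_def, mul_smul]⟩
  haveI : IsScalarTower k S ↥(Q.L lam) := ⟨fun a s x => by
    change (a • s) • x = algebraMap k S a • (s • x)
    rw [Algebra.smul_def, mul_smul]⟩
  haveI := Q.finiteL lam
  haveI : Module.Finite k ↥(Q.L lam) := Module.Finite.trans S _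
  obtain ⟨φ, hφ⟩ := LinearMap.exists_leftInverse_of_injective (ι.restrictScalars k)
    (LinearMap.ker_eq_bot.2 hi)
  let Ψ : ↥(Q.I lam) →ₗ[k] (S →ₗ[k] ↥(Q.L lam)) :=
    { toFun := fun x => φ ∘ₗ (LinearMap.toSpanSingleton S _ x).restrictScalars k
      map_add' := fun x y => by ext s; simp
      map_smul' := fun a x => by
        ext s
        simp only [LinearMap.comp_apply, LinearMap.restrictScalars_apply,
          LinearMap.toSpanSingleton_apply, RingHom.id_apply, LinearMap.smul_apply]
        rw [← map_smul, smul_algebra_smul_comm] }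
  have hΨ : Function.Injective Ψ := by
    rw [← LinearMap.ker_eq_bot, LinearMap.ker_eq_bot']
    intro x hx
    have h1 : Submodule.span S {x} ⊓ LinearMap.range ι = ⊥ := by
      rw [eq_bot_iff]
      rintro y ⟨hy1, l, rfl⟩
      obtain ⟨s, hs⟩ := Submodule.mem_span_singleton.1 hy1
      have h2 : φ (s • x) = 0 := LinearMap.congr_fun hx s
      rw [hs] at h2
      have h3 : φ (ι l) = l := LinearMap.congr_fun hφ l
      rw [h3] at h2
      simp [h2]
    have := hN _ h1
    rwa [Submodule.span_singleton_eq_bot] at this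
  haveI : Module.Finite k ↥(Q.I lam) := Module.Finite.of_injective Ψ hΨ
  exact Module.Finite.of_restrictScalars_finite k S _

theorem fincostd (lam : Λ) : FD (Q.costd lam) := by
  obtain ⟨q, h, -⟩ := costd_spec Q lam
  exact (finI Q lam).sub h

theorem finFilt {ι : Type} {D : ι → ModuleCat.{0} S} (hD : ∀ i, FD (D i)) {M : ModuleCat.{0} S}
    (h : Filt D M) : FD M := by
  refine h.elim FD (fun M hM => ?_) ?_
  · exact inferInstance
  · intro i A B a b hs hA
    exact FD.ses hs hA (hD i)

theorem std_top (lam : Λ) : ∃ t : ↥(Q.std lam) →ₗ[S] ↥(Q.L lam), Function.Surjective t ∧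
    (∀ κ, HF Q κ (ModuleCat.of S (LinearMap.ker t)) → κ < lam) ∧
    ∀ (M : ModuleCat.{0} S) (u : ↥M →ₗ[S] ↥(Q.std lam)), t ∘ₗ u ≠ 0 → Function.Surjective u := by
  obtain ⟨q, hq, h1, h2⟩ := std_spec Q lam
  obtain ⟨π, hπ, h0, hv⟩ := exists_pi Q lam
  obtain ⟨t, rfl⟩ := h2 _ π (fun κ hκ => (HF.L_iff.1 hκ).le)
  have ht : Function.Surjective t := by
    intro y
    obtain ⟨x, hx⟩ := hπ y
    exact ⟨q x, hx⟩
  refine ⟨t, ht, ?_, ?_⟩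
  · intro κ hκ
    have hs := ses_ker t ht
    have h3 := mu_ses (Q := Q) (κ := lam) hs
    rw [mu_of_mult (Q.multOne lam), mu_self] at h3
    have h4 : mu Q lam (ModuleCat.of S (LinearMap.ker t)) = 0 := by
      have : (0 : ℕ∞) + 1 = mu Q lam (ModuleCat.of S (LinearMap.ker t)) + 1 := by
        rw [← h3]; simp
      exact (ENat.add_left_injective_of_ne_top (n := 1) (by simp) this).symm
    refine lt_of_le_of_ne (h1 κ (hκ.of_inj hs.inj)) ?_
    rintro rfl
    exact mu_zero.1 h4 hκ
  · intro M u hu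
    have hsu := surj_of_simple (Q.simpleL lam) _ hu
    let h : ↥(Q.P lam) →ₗ[S] (↥(Q.std lam) ⧸ LinearMap.range u) := (LinearMap.range u).mkQ ∘ₗ q
    have hh : h = 0 := by
      by_contra hne
      obtain ⟨v, hv⟩ := hv (ModuleCat.of S (↥(Q.std lam) ⧸ LinearMap.range u)) h hne
      obtain ⟨l, hl⟩ := L_ne Q lam
      obtain ⟨m, rfl⟩ := hsu l
      obtain ⟨y, hy⟩ := hq (u m)
      have h3 : h y = 0 := by simp [h, hy]
      have h4 := hv y
      have h5 : (⟨h y, y, rfl⟩ : LinearMap.range h) = 0 := Subtype.ext h3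
      rw [h5, map_zero] at h4
      apply hl
      simp only [LinearMap.comp_apply] at h4 ⊢
      rw [← hy, ← h4]
    intro x
    obtain ⟨y, rfl⟩ := hq x
    have := LinearMap.congr_fun hh y
    simpa [h, Submodule.Quotient.mk_eq_zero] using this

theorem submodule_le_of_simple {L M : ModuleCat.{0} S} (hL : IsSimpleModule S ↥L)
    (j : ↥L →ₗ[S] ↥M) (N : Submodule S ↥M) (l : ↥L) (hl : l ≠ 0) (h : j l ∈ N) :
    LinearMap.range j ≤ N := by
  have h1 : N.comap j = ⊤ := by
    refine (eq_bot_or_eq_top (N.comap j)).resolve_left (fun h0 => hl ?_)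
    have : l ∈ N.comap j := h
    rw [h0] at this
    exact this
  rintro _ ⟨x, rfl⟩
  have : x ∈ N.comap j := by rw [h1]; trivial
  exact this

theorem costd_soc (lam : Λ) : ∃ j : ↥(Q.L lam) →ₗ[S] ↥(Q.costd lam), Function.Injective j ∧
    (∀ N : Submodule S ↥(Q.costd lam), N ≠ ⊥ → LinearMap.range j ≤ N) ∧
    (∀ κ, HF Q κ (ModuleCat.of S (↥(Q.costd lam) ⧸ LinearMap.range j)) → κ < lam) := by
  obtain ⟨i, hi, h1, h2⟩ := costd_spec Q lam
  obtain ⟨-, ι, hι, hN⟩ := Q.injHull lam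
  obtain ⟨j, hj⟩ := h2 _ ι (fun κ hκ => (HF.L_iff.1 hκ).le)
  have hj' : ∀ x, i (j x) = ι x := LinearMap.congr_fun hj
  have hjinj : Function.Injective j := by
    intro x y hxy; apply hι; rw [← hj', ← hj', hxy]
  have hsoc : ∀ N : Submodule S ↥(Q.costd lam), N ≠ ⊥ → LinearMap.range j ≤ N := by
    intro N hN0
    have h3 : N.map i ⊓ LinearMap.range ι ≠ ⊥ := by
      intro h4
      have := hN _ h4
      apply hN0
      rw [← Submodule.comap_map_eq_of_injective hi N, this]
      exact LinearMap.ker_eq_bot.2 hi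
    obtain ⟨x, ⟨⟨n, hn, hx⟩, ⟨l, hl⟩⟩, hx0⟩ := Submodule.exists_mem_ne_zero_of_ne_bot h3
    refine submodule_le_of_simple (Q.simpleL lam) j N l ?_ ?_
    · rintro rfl; exact hx0 (by rw [← hl, map_zero])
    · have : n = j l := hi (by rw [hx, hj', hl])
      rwa [← this]
  refine ⟨j, hjinj, hsoc, ?_⟩
  intro κ hκ
  have hs := ses_coker j hjinj
  refine lt_of_le_of_ne (h1 κ (hκ.of_surj hs.surj)) ?_
  rintro rfl
  obtain ⟨h, hh⟩ := hκ
  obtain ⟨h', rfl⟩ := Plift Q κ hs.surj h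
  obtain ⟨q, hq, -, h4⟩ := std_spec Q κ
  obtain ⟨t, ht, hR, -⟩ := std_top Q κ
  obtain ⟨v, rfl⟩ := h4 _ h' h1
  have h5 : ∀ x, t x = 0 → v x = 0 := by
    have : LinearMap.range (v ∘ₗ (LinearMap.ker t).subtype) = ⊥ := by
      by_contra hne
      have h6 := hsoc _ hne
      have h7 : HF Q κ (ModuleCat.of S (LinearMap.range (v ∘ₗ (LinearMap.ker t).subtype))) :=
        (HF.self κ).of_inj (f := j.codRestrict _ (fun x => h6 ⟨x, rfl⟩))
          (fun x y hxy => hjinj (congrArg Subtype.val hxy))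
      have h8 : HF Q κ (ModuleCat.of S (LinearMap.ker t)) := h7.of_surj
        (g := (v ∘ₗ (LinearMap.ker t).subtype).rangeRestrict) (LinearMap.surjective_rangeRestrict _)
      exact lt_irrefl _ (hR κ h8)
    rw [LinearMap.range_eq_bot] at this
    intro x hx
    exact LinearMap.congr_fun this ⟨x, hx⟩
  obtain ⟨w, rfl⟩ := factor_surj t ht v h5
  have h9 : LinearMap.range w ≤ LinearMap.range j := by
    by_cases hw : LinearMap.range w = ⊥
    · rw [hw]; exact bot_le
    have h6 := hsoc _ hw
    obtain ⟨l, hl⟩ := L_ne Q κ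
    obtain ⟨l', hl'⟩ := h6 ⟨l, rfl⟩
    refine submodule_le_of_simple (Q.simpleL κ) w _ l' ?_ ⟨l, hl'.symm⟩
    rintro rfl
    exact hl (hjinj (by rw [← hl', map_zero, map_zero]))
  apply hh
  ext x
  have : w (t (q x)) ∈ LinearMap.range j := h9 ⟨_, rfl⟩
  simpa [Submodule.Quotient.mk_eq_zero] using this

end FinSec
end QHProof

open CategoryTheory
set_option linter.unusedSectionVars false
set_option linter.style.haveILetI false
set_option linter.unusedVariables false

namespace QHProof
open QHPaper CategoryTheory.Abelian

section ExtSec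
variable {S : Type} [Ring S] [FDA S]

/-- length as a natural number -/
noncomputable def len (M : ModuleCat.{0} S) : ℕ := (Module.length S ↥M).toNat

theorem len_ses {A B C : ModuleCat.{0} S} {f : ↥A →ₗ[S] ↥B} {g : ↥B →ₗ[S] ↥C}
    (hs : SES f g) (hB : FD B) : len B = len A + len C := by
  have hA : FD A := hB.sub hs.inj
  have hC : FD C := hB.quot hs.surj
  have h := Module.length_eq_add_of_exact f g hs.inj hs.surj (fun x => hs.ex x)
  unfold len
  rw [h, ENat.toNat_add (Module.length_ne_top_iff.2 hA.len) (Module.length_ne_top_iff.2 hC.len)]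

theorem len_pos {M : ModuleCat.{0} S} (h : FD M) (hn : Nontrivial M) : 0 < len M := by
  unfold len
  rw [Nat.pos_iff_ne_zero]
  intro h0
  rw [ENat.toNat_eq_zero] at h0
  rcases h0 with h0 | h0
  · rw [Module.length_eq_zero_iff] at h0
    exact not_subsingleton _ h0
  · exact Module.length_ne_top_iff.2 h.len h0

variable {Λ : Type} [Fintype Λ] [PartialOrder Λ] (Q : QHData S Λ)

theorem std_K (μ : Λ) : ∃ (K : ModuleCat.{0} S) (f : ↥K →ₗ[S] ↥(Q.P μ))
    (q : ↥(Q.P μ) →ₗ[S] ↥(Q.std μ)), SES f q ∧ Filt (fun ν : {ν // μ < ν} => Q.std ν) K := by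
  obtain ⟨n, f, g, H, hle, hcard⟩ := Q.projFilt μ
  cases n with
  | zero => simp at hcard
  | succ n =>
    obtain ⟨b, hb⟩ := top_ses H
    have hl : μ = g (Fin.last n) := by
      obtain ⟨t, ht, -, -⟩ := std_top Q (g (Fin.last n))
      rw [← HF.L_iff (Q := Q)]
      refine ⟨t ∘ₗ b, fun h0 => ?_⟩
      obtain ⟨x, hx⟩ := L_ne Q (g (Fin.last n))
      obtain ⟨y, rfl⟩ := ht x
      obtain ⟨z, rfl⟩ := hb.surj y
      exact hx (LinearMap.congr_fun h0 z)
    have hK : Filt (fun ν : {ν // μ < ν} => Q.std ν) (ModuleCat.of S (f ⟨n, by omega⟩)) := by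
      refine filt_partial H _ (fun M hM => Filt.zero hM) n (by omega) ?_
      intro i hi A B a b hs hA
      have hne : g i ≠ μ := by
        intro he
        obtain ⟨h1, -⟩ := Nat.card_eq_one_iff_unique.1 hcard
        have := h1.elim ⟨i, he⟩ ⟨Fin.last n, hl.symm⟩
        have := congrArg (fun z => (z.1 : ℕ)) this
        simp at this
        omega
      exact Filt.snoc (D := fun ν : {ν // μ < ν} => Q.std ν)
        (i := ⟨g i, lt_of_le_of_ne (hle i) (Ne.symm hne)⟩) hs hA
    generalize g (Fin.last n) = ν at b hb hl
    subst hl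
    exact ⟨_, _, b, hb, hK⟩

theorem van_std_of {μ : Λ} {N : ModuleCat.{0} S} (hN : ∀ κ, HF Q κ N → ¬ μ < κ) :
    Van 1 (Q.std μ) N := by
  obtain ⟨K, f, q, hs, hK⟩ := std_K Q μ
  refine hs.van_right_con1 ?_ (Van.of_proj (Q.projCover μ).1)
  intro u
  suffices u = 0 by exact ⟨0, by rw [this]; rfl⟩
  revert u
  clear hs f
  refine hK.elim (fun K => ∀ u : ↥K →ₗ[S] ↥N, u = 0) ?_ ?_
  · intro M hM u; ext x; rw [Subsingleton.elim x 0]; simp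
  · intro i A B a b hs ih u
    obtain ⟨v, rfl⟩ := hs.desc u (LinearMap.congr_fun (ih (u ∘ₗ a)))
    obtain ⟨q, hq, -⟩ := std_spec Q i.1
    have : v = 0 := by
      by_contra hv
      refine hN i.1 ⟨v ∘ₗ q, fun h0 => hv ?_⟩ i.2
      ext x
      obtain ⟨y, rfl⟩ := hq x
      exact LinearMap.congr_fun h0 y
    rw [this, LinearMap.zero_comp]

theorem van_fd_left {n : ℕ} {C : Λ → Prop} {Y : ModuleCat.{0} S} (hC : ∀ κ, C κ → Van n (Q.L κ) Y)
    {M : ModuleCat.{0} S} (hM : FD M) (h : ∀ κ, HF Q κ M → C κ) : Van n M Y := by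
  revert h
  refine hM.ind Q (fun M => (∀ κ, HF Q κ M → C κ) → Van n M Y) ?_ ?_
  · intro M _ _; exact Van.of_sub_left
  · intro κ A B a b hs ih h
    exact hs.van_mid_con (ih (fun κ' h' => h _ (h'.of_inj hs.inj)))
      (hC _ (h _ ((HF.self κ).of_surj hs.surj)))

theorem van_fd_right {n : ℕ} {C : Λ → Prop} {X : ModuleCat.{0} S} (hC : ∀ κ, C κ → Van n X (Q.L κ))
    {M : ModuleCat.{0} S} (hM : FD M) (h : ∀ κ, HF Q κ M → C κ) : Van n X M := by
  revert h
  refine hM.ind Q (fun M => (∀ κ, HF Q κ M → C κ) → Van n X M) ?_ ?_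
  · intro M _ _; exact Van.of_sub_right
  · intro κ A B a b hs ih h
    exact hs.van_mid_cov (ih (fun κ' h' => h _ (h'.of_inj hs.inj)))
      (hC _ (h _ ((HF.self κ).of_surj hs.surj)))

theorem van_L_costd_le {κ ν : Λ} (h : κ ≤ ν) : Van 1 (Q.L κ) (Q.costd ν) := by
  obtain ⟨i, hi, h1, h2⟩ := costd_spec Q ν
  have hs := ses_coker i hi
  refine hs.van_left_cov1 ?_ (Van.of_inj (Q.injHull ν).1)
  intro u
  suffices u = 0 by exact ⟨0, by rw [this]; simp⟩
  by_contra hu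
  have hs2 := ses_coker u (inj_of_simple (Q.simpleL κ) u hu)
  obtain ⟨B', f', g', b, hA, hB, hc, -⟩ := hs.pull hs2
  obtain ⟨v, hv⟩ := h2 B' b (fun κ' h' => by
    rcases h'.ses hA with h3 | h3
    · exact h1 _ h3
    · rw [HF.L_iff.1 h3]; exact h)
  obtain ⟨x, hx⟩ := L_ne Q κ
  obtain ⟨y, rfl⟩ := hA.surj x
  apply hx
  apply hs2.inj
  rw [hc, map_zero, ← hv]
  exact hs.comp_zero (v y)

theorem van1_std_costd (μ ν : Λ) : Van 1 (Q.std μ) (Q.costd ν) := by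
  by_cases h : μ < ν
  · exact van_fd_left Q (C := fun κ => κ ≤ ν) (fun κ hκ => van_L_costd_le Q hκ) (finstd Q μ)
      (fun κ hκ => (std_le Q hκ).trans h.le)
  · exact van_std_of Q (fun κ hκ h' => h (h'.trans_le (costd_le Q hκ)))

theorem van_std_costd (n : ℕ) (μ ν : Λ) : Van (n + 1) (Q.std μ) (Q.costd ν) := by
  induction n generalizing μ with
  | zero => exact van1_std_costd Q μ ν
  | succ n ih =>
    obtain ⟨K, f, q, hs, hK⟩ := std_K Q μ
    refine hs.van_right_con ?_ (Van.of_proj (Q.projCover μ).1)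
    refine hK.elim (fun K => Van (n + 1) K (Q.costd ν)) (fun M hM => Van.of_sub_left) ?_
    intro i A B a b hs hA
    exact hs.van_mid_con hA (ih _)

theorem van_filt {n : ℕ} {M N : ModuleCat.{0} S} (hM : Filt Q.std M) (hN : Filt Q.costd N) :
    Van (n + 1) M N := by
  refine hM.elim (fun M => Van (n + 1) M N) (fun M hM => Van.of_sub_left) ?_
  intro i A B a b hs hA
  refine hs.van_mid_con hA ?_
  refine hN.elim (fun N => Van (n + 1) (Q.std i) N) (fun M hM => Van.of_sub_right) ?_
  intro i A B a b hs hA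
  exact hs.van_mid_cov hA (van_std_costd Q _ _ _)

theorem hom_costd_zero {X : ModuleCat.{0} S} {ν : Λ} (h : ¬ HF Q ν X)
    (u : ↥X →ₗ[S] ↥(Q.costd ν)) : u = 0 := by
  by_contra hu
  obtain ⟨j, hj, hsoc, -⟩ := costd_soc Q ν
  have h6 := hsoc (LinearMap.range u) (fun h0 => hu (LinearMap.range_eq_bot.1 h0))
  apply h
  have h7 : HF Q ν (ModuleCat.of S (LinearMap.range u)) :=
    (HF.self ν).of_inj (f := j.codRestrict _ (fun x => h6 ⟨x, rfl⟩))
      (fun x y hxy => hj (congrArg Subtype.val hxy))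
  exact h7.of_surj (g := u.rangeRestrict) (LinearMap.surjective_rangeRestrict _)

theorem van_L_costd {κ ν : Λ} (h : ¬ ν < κ) : Van 1 (Q.L κ) (Q.costd ν) := by
  obtain ⟨t, ht, hR, -⟩ := std_top Q κ
  refine (ses_ker t ht).van_right_con1 ?_ (van1_std_costd Q κ ν)
  intro u
  exact ⟨0, by rw [hom_costd_zero Q (fun h' => h (hR _ h')) u]; rfl⟩

theorem van_fd_costd {ν : Λ} {M : ModuleCat.{0} S} (hM : FD M) (h : ∀ κ, HF Q κ M → ¬ ν < κ) :
    Van 1 M (Q.costd ν) :=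
  van_fd_left Q (C := fun κ => ¬ ν < κ) (fun κ hκ => van_L_costd Q hκ) hM h

/-- homological description of `F(Δ)` -/
def XX (M : ModuleCat.{0} S) : Prop := FD M ∧ ∀ ν, Van 1 M (Q.costd ν)

/-- homological description of `F(∇)` -/
def YY (M : ModuleCat.{0} S) : Prop := FD M ∧ ∀ ν, Van 1 (Q.std ν) M

theorem XX.of_filt {M : ModuleCat.{0} S} (h : Filt Q.std M) : XX Q M :=
  ⟨finFilt (finstd Q) h, fun ν => van_filt Q h (Filt.single _ _)⟩

theorem YY.of_filt {M : ModuleCat.{0} S} (h : Filt Q.costd M) : YY Q M :=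
  ⟨finFilt (fincostd Q) h, fun ν => van_filt Q (Filt.single _ _) h⟩

theorem exists_min_of {C : Λ → Prop} (h : ∃ x, C x) : ∃ x, C x ∧ ∀ y, y < x → ¬ C y := by
  classical
  obtain ⟨x, hx⟩ := h
  obtain ⟨m, hm, hmin⟩ := (wellFounded_lt (α := Λ)).has_min {x | C x} ⟨x, hx⟩
  exact ⟨m, hm, fun y hy hc => hmin y hc hy⟩

theorem XX.filt_aux (n : ℕ) : ∀ M : ModuleCat.{0} S, len M = n → XX Q M → Filt Q.std M := by
  induction n using Nat.strong_induction_on with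
  | _ n ih =>
  intro M hn hM
  by_cases hsub : Subsingleton M
  · exact Filt.zero hsub
  have hnt := not_subsingleton_iff_nontrivial.1 hsub
  obtain ⟨lam, ⟨b, hb⟩, hmin⟩ := exists_min_of (exists_L_quot Q hM.1 hnt)
  obtain ⟨t, ht, hR, hsurj⟩ := std_top Q lam
  have hs := ses_ker t ht
  have hfin : FD (ModuleCat.of S (LinearMap.ker t)) := (finstd Q lam).sub hs.inj
  have h1 : Van 1 M (ModuleCat.of S (LinearMap.ker t)) := by
    refine van_fd_right Q (C := fun κ => κ < lam) ?_ hfin hR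
    intro μ hμ
    obtain ⟨j, hj, -, hQ⟩ := costd_soc Q μ
    have hsj := ses_coker j hj
    refine hsj.van_left_cov1 ?_ (hM.2 μ)
    intro u
    suffices u = 0 by exact ⟨0, by rw [this]; simp⟩
    by_contra hu
    have hr : Nontrivial (ModuleCat.of S (LinearMap.range u)) :=
      Submodule.nontrivial_iff_ne_bot.2 (fun h0 => hu (LinearMap.range_eq_bot.1 h0))
    obtain ⟨κ, c, hc⟩ := exists_L_quot Q (hM.1.quot (f := u.rangeRestrict)
      u.surjective_rangeRestrict) hr
    have hcs := surj_of_simple (Q.simpleL κ) c hc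
    have hκ : κ < μ := hQ κ (((HF.self κ).of_surj hcs).of_inj
      (f := (LinearMap.range u).subtype) (Submodule.injective_subtype _))
    refine hmin κ (hκ.trans hμ) ⟨c ∘ₗ u.rangeRestrict, fun h0 => hc ?_⟩
    ext x
    obtain ⟨y, rfl⟩ := u.surjective_rangeRestrict x
    exact LinearMap.congr_fun h0 y
  obtain ⟨v, hv⟩ := hs.lift h1 b
  have hvs := hsurj M v (by rw [hv]; exact hb)
  have hsv := ses_ker v hvs
  have hlen := len_ses hsv hM.1
  have hpos : 0 < len (Q.std lam) := len_pos (finstd Q lam) (by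
    obtain ⟨x, hx⟩ := L_ne Q lam
    obtain ⟨y, rfl⟩ := ht x
    exact ⟨y, 0, fun h => hx (by rw [h, map_zero])⟩)
  exact Filt.snoc hsv (ih _ (by omega) _ rfl ⟨hM.1.sub hsv.inj, fun ν =>
    hsv.van_left_con (hM.2 ν) (van_std_costd Q 1 _ _)⟩)

theorem XX.filt {M : ModuleCat.{0} S} (h : XX Q M) : Filt Q.std M := XX.filt_aux Q _ M rfl h

theorem YY.filt_aux (n : ℕ) : ∀ M : ModuleCat.{0} S, len M = n → YY Q M → Filt Q.costd M := by
  induction n using Nat.strong_induction_on with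
  | _ n ih =>
  intro M hn hM
  by_cases hsub : Subsingleton M
  · exact Filt.zero hsub
  have hnt := not_subsingleton_iff_nontrivial.1 hsub
  obtain ⟨lam, ⟨b, hb⟩, hmin⟩ := exists_min_of (exists_L_sub Q hM.1 hnt)
  obtain ⟨j, hj, hsoc, hQ⟩ := costd_soc Q lam
  have hs := ses_coker j hj
  have hfin : FD (ModuleCat.of S (↥(Q.costd lam) ⧸ LinearMap.range j)) :=
    (fincostd Q lam).quot hs.surj
  have h1 : Van 1 (ModuleCat.of S (↥(Q.costd lam) ⧸ LinearMap.range j)) M := by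
    refine van_fd_left Q (C := fun κ => κ < lam) ?_ hfin hQ
    intro μ hμ
    obtain ⟨t, ht, hR, -⟩ := std_top Q μ
    have hst := ses_ker t ht
    refine hst.van_right_con1 ?_ (hM.2 μ)
    intro u
    suffices u = 0 by exact ⟨0, by rw [this]; rfl⟩
    by_contra hu
    have hr : Nontrivial (ModuleCat.of S (LinearMap.range u)) :=
      Submodule.nontrivial_iff_ne_bot.2 (fun h0 => hu (LinearMap.range_eq_bot.1 h0))
    obtain ⟨κ, c, hc⟩ := exists_L_sub Q (hM.1.sub (f := (LinearMap.range u).subtype)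
      (Submodule.injective_subtype _)) hr
    have hcs := inj_of_simple (Q.simpleL κ) c hc
    have hκ : κ < μ := hR κ (((HF.self κ).of_inj hcs).of_surj (g := u.rangeRestrict)
      u.surjective_rangeRestrict)
    refine hmin κ (hκ.trans hμ) ⟨(LinearMap.range u).subtype ∘ₗ c, fun h0 => hc ?_⟩
    ext x
    exact LinearMap.congr_fun h0 x
  obtain ⟨v, hv⟩ := hs.extend h1 b
  have hvi : Function.Injective v := by
    rw [← LinearMap.ker_eq_bot]
    by_contra hne
    apply hb
    rw [← hv]
    ext x
    exact hsoc _ hne ⟨x, rfl⟩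
  have hsv := ses_coker v hvi
  have hlen := len_ses hsv hM.1
  have hpos : 0 < len (Q.costd lam) := len_pos (fincostd Q lam) (by
    obtain ⟨x, hx⟩ := L_ne Q lam
    exact ⟨j x, 0, fun h => hx (hj (by rw [h, map_zero]))⟩)
  exact Filt.ext hsv (Filt.single _ _) (ih _ (by omega) _ rfl ⟨hM.1.quot hsv.surj, fun ν =>
    hsv.van_right_cov (hM.2 ν) (van_std_costd Q 1 _ _)⟩)

theorem YY.filt {M : ModuleCat.{0} S} (h : YY Q M) : Filt Q.costd M := YY.filt_aux Q _ M rfl h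

end ExtSec
end QHProof

open CategoryTheory
set_option linter.unusedSectionVars false
set_option linter.style.haveILetI false
set_option linter.unusedVariables false

namespace QHProof
open QHPaper CategoryTheory.Abelian

section ApproxSec
variable {S : Type} [Ring S] [FDA S]

theorem hom_gen {K D : ModuleCat.{0} S} (hK : FD K) (hD : FD D) :
    ∃ (n : ℕ) (g : ↥K →ₗ[S] (Fin n → ↥D)), ∀ u : ↥K →ₗ[S] ↥D,
      ∃ θ : (Fin n → ↥D) →ₗ[S] ↥D, θ ∘ₗ g = u := by
  obtain ⟨k, _, _, _⟩ := FDA.out (S := S)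
  letI : Module k ↥K := Module.compHom _ (algebraMap k S)
  letI : Module k ↥D := Module.compHom _ (algebraMap k S)
  haveI : IsScalarTower k S ↥K := ⟨fun a s x => by
    change (a • s) • x = algebraMap k S a • (s • x)
    rw [Algebra.smul_def, mul_smul]⟩
  haveI : IsScalarTower k S ↥D := ⟨fun a s x => by
    change (a • s) • x = algebraMap k S a • (s • x)
    rw [Algebra.smul_def, mul_smul]⟩
  haveI : Module.Finite k ↥K := Module.Finite.trans S _
  haveI : Module.Finite k ↥D := Module.Finite.trans S _
  haveI : SMulCommClass S k ↥D := IsScalarTower.to_smulCommClass'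
  let Ψ : (↥K →ₗ[S] ↥D) →ₗ[k] (↥K →ₗ[k] ↥D) :=
    { toFun := fun u => u.restrictScalars k
      map_add' := fun _ _ => rfl
      map_smul' := fun _ _ => rfl }
  have hΨ : Function.Injective Ψ := LinearMap.restrictScalars_injective k
  haveI : Module.Finite k (↥K →ₗ[S] ↥D) := Module.Finite.of_injective Ψ hΨ
  obtain ⟨n, s, hs⟩ := Module.Finite.exists_fin (R := k) (M := ↥K →ₗ[S] ↥D)
  refine ⟨n, LinearMap.pi s, fun u => ?_⟩
  have hu : u ∈ Submodule.span k (Set.range s) := by rw [hs]; trivial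
  obtain ⟨c, hc⟩ := (Submodule.mem_span_range_iff_exists_fun k).1 hu
  refine ⟨∑ i, c i • (LinearMap.proj i : (Fin n → ↥D) →ₗ[S] ↥D), ?_⟩
  rw [← hc]
  ext x
  simp

variable {Λ : Type} [Fintype Λ] [PartialOrder Λ] (Q : QHData S Λ)

theorem filt_pow (ν : Λ) (n : ℕ) : Filt Q.costd (ModuleCat.of S (Fin n → ↥(Q.costd ν))) := by
  induction n with
  | zero => exact Filt.zero (inferInstanceAs (Subsingleton (Fin 0 → ↥(Q.costd ν))))
  | succ n ih =>
    have h := Filt.ext (ses_prod (Q.costd ν) (ModuleCat.of S (Fin n → ↥(Q.costd ν))))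
      (Filt.single _ _) ih
    exact h.of_equiv (Fin.consLinearEquiv S (fun _ : Fin (n + 1) => ↥(Q.costd ν)))

theorem HF.pow {ν κ : Λ} {n : ℕ} (h : HF Q κ (ModuleCat.of S (Fin n → ↥(Q.costd ν)))) :
    κ ≤ ν := by
  obtain ⟨u, hu⟩ := h
  by_contra hne
  apply hu
  refine LinearMap.ext fun x => funext fun i => ?_
  by_contra hx
  apply hne
  apply costd_le Q
  refine ⟨LinearMap.proj i ∘ₗ u, fun h0 => hx ?_⟩
  exact LinearMap.congr_fun h0 x

/-- the universal extension of `U` by copies of `∇ν` -/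
theorem univ_ext (ν : Λ) {U : ModuleCat.{0} S} (hU : FD U) :
    ∃ (n : ℕ) (U' : ModuleCat.{0} S) (z : (Fin n → ↥(Q.costd ν)) →ₗ[S] ↥U') (p : ↥U' →ₗ[S] ↥U),
      SES (A := ModuleCat.of S (Fin n → ↥(Q.costd ν))) z p ∧ Van 1 U' (Q.costd ν) := by
  obtain ⟨m, q, hq⟩ := Module.Finite.exists_fin' S ↥U
  have hsq := ses_ker (M := ModuleCat.of S (Fin m → S)) q hq
  have hK : FD (ModuleCat.of S (LinearMap.ker q)) := by
    have : FD (ModuleCat.of S (Fin m → S)) := inferInstanceAs (Module.Finite S (Fin m → S))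
    exact this.sub hsq.inj
  obtain ⟨n, g, hg⟩ := hom_gen hK (fincostd Q ν)
  let Z := ModuleCat.of S (Fin n → ↥(Q.costd ν))
  let PZ := ModuleCat.of S ((Fin m → S) × ↥Z)
  let mm : LinearMap.ker q →ₗ[S] ↥PZ := LinearMap.prod (LinearMap.ker q).subtype (-g)
  have hmm : Function.Injective mm := fun x y hxy => Subtype.ext (congrArg Prod.fst hxy)
  have hsm := ses_coker (M := ModuleCat.of S (LinearMap.ker q)) (N := PZ) mm hmm
  have hfac : LinearMap.range mm ≤ LinearMap.ker (q ∘ₗ LinearMap.fst S (Fin m → S) ↥Z) := by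
    rintro _ ⟨x, rfl⟩
    exact x.2
  refine ⟨n, ModuleCat.of S (↥PZ ⧸ LinearMap.range mm),
    (LinearMap.range mm).mkQ ∘ₗ LinearMap.inr S (Fin m → S) ↥Z,
    (LinearMap.range mm).liftQ (q ∘ₗ LinearMap.fst S (Fin m → S) ↥Z) hfac, ⟨?_, ?_, ?_⟩, ?_⟩
  · rw [← LinearMap.ker_eq_bot, LinearMap.ker_eq_bot']
    intro x hx
    obtain ⟨y, hy⟩ := (Submodule.Quotient.mk_eq_zero _).1 hx
    have h1 : (y : Fin m → S) = 0 := congrArg Prod.fst hy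
    have h2 : y = 0 := Subtype.ext h1
    have h3 := congrArg Prod.snd hy
    rw [h2, map_zero] at h3
    exact h3.symm
  · intro x
    obtain ⟨y, rfl⟩ := hq x
    exact ⟨(LinearMap.range mm).mkQ (y, 0), rfl⟩
  · intro x
    obtain ⟨⟨a, b⟩, rfl⟩ := (LinearMap.range mm).mkQ_surjective x
    constructor
    · intro h
      have h1 : q a = 0 := h
      refine ⟨b + g ⟨a, h1⟩, ?_⟩
      refine ((Submodule.Quotient.eq _).2 ?_)
      refine ⟨-⟨a, h1⟩, ?_⟩
      rw [map_neg]
      refine Prod.ext ?_ ?_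
      · change -a = (0 : Fin m → S) - a
        simp
      · change -(-(g ⟨a, h1⟩)) = b + g ⟨a, h1⟩ - b
        rw [neg_neg, add_sub_cancel_left]
    · rintro ⟨y, hy⟩
      rw [← hy]
      exact map_zero q
  · refine hsm.van_right_con1 ?_ ?_
    · intro u
      obtain ⟨θ, rfl⟩ := hg u
      refine ⟨-(θ ∘ₗ LinearMap.snd S (Fin m → S) ↥Z), ?_⟩
      refine LinearMap.ext fun x => ?_
      change -(θ (-(g x))) = θ (g x)
      rw [map_neg, neg_neg]
    · refine (ses_prod (ModuleCat.of S (Fin m → S)) Z).van_mid_con (Van.of_proj ?_) ?_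
      · exact inferInstanceAs (Module.Projective S (Fin m → S))
      · refine van_fd_costd Q (finFilt (fincostd Q) (filt_pow Q ν n)) ?_
        intro κ hκ hlt
        exact absurd (HF.pow Q hκ) (not_le_of_gt hlt)

theorem approx_aux {M : ModuleCat.{0} S} (hM : FD M) (j : ℕ) (hj : j ≤ Fintype.card Λ) :
    ∃ (A : Finset Λ), A.card = j ∧ (∀ x ∈ A, ∀ y, x < y → y ∈ A) ∧
      ∃ (Y U : ModuleCat.{0} S) (y : ↥Y →ₗ[S] ↥U) (p : ↥U →ₗ[S] ↥M), SES y p ∧ FD U ∧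
      (∀ ν ∈ A, Van 1 U (Q.costd ν)) ∧ YY Q Y ∧ ∀ κ, HF Q κ Y → ∃ κ', HF Q κ' M ∧ κ < κ' := by
  classical
  induction j with
  | zero =>
    have hsub : Subsingleton (ModuleCat.of S PUnit) := inferInstanceAs (Subsingleton PUnit)
    refine ⟨∅, rfl, by simp, ModuleCat.of S PUnit, M, 0, LinearMap.id, ⟨?_, Function.surjective_id, ?_⟩,
      hM, by simp, YY.of_filt Q (Filt.zero hsub), fun κ h => absurd h HF.not_sub⟩
    · intro x y _; exact Subsingleton.elim (α := PUnit) _ _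
    · intro x
      constructor
      · intro h; exact ⟨PUnit.unit, h.symm⟩
      · rintro ⟨y, rfl⟩; rfl
  | succ j ih =>
    obtain ⟨A, hcard, hup, Y, U, y, p, hs, hU, hV, hY, hHF⟩ := ih (by omega)
    have hex : ∃ ν, ν ∉ A := by
      by_contra hcon
      push Not at hcon
      have : A = Finset.univ := Finset.eq_univ_iff_forall.2 hcon
      rw [this, Finset.card_univ] at hcard
      omega
    obtain ⟨ν, hν, hmax⟩ : ∃ ν, ν ∉ A ∧ ∀ x, ν < x → x ∈ A := by
      obtain ⟨m, hm, hm2⟩ := (wellFounded_gt (α := Λ)).has_min {x | x ∉ A} hex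
      refine ⟨m, hm, fun x hx => ?_⟩
      by_contra hx2
      exact hm2 x hx2 hx
    refine ⟨insert ν A, by rw [Finset.card_insert_of_notMem hν, hcard], ?_, ?_⟩
    · intro x hx z hz
      rcases Finset.mem_insert.1 hx with rfl | hx
      · exact Finset.mem_insert_of_mem (hmax z hz)
      · exact Finset.mem_insert_of_mem (hup x hx z hz)
    by_cases hvan : Van 1 U (Q.costd ν)
    · refine ⟨Y, U, y, p, hs, hU, ?_, hY, hHF⟩
      intro x hx
      rcases Finset.mem_insert.1 hx with rfl | hx
      · exact hvan
      · exact hV x hx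
    · obtain ⟨κ1, hκ1, hlt⟩ : ∃ κ', HF Q κ' M ∧ ν < κ' := by
        by_contra hcon
        apply hvan
        refine van_fd_costd Q hU ?_
        intro κ hκ hlt
        apply hcon
        rcases hκ.ses hs with h | h
        · obtain ⟨κ', h1, h2⟩ := hHF κ h
          exact ⟨κ', h1, hlt.trans h2⟩
        · exact ⟨κ, h, hlt⟩
      obtain ⟨n, U', z, p', hs', hvU'⟩ := univ_ext Q ν hU
      have hZ := filt_pow Q ν n
      have hZf := finFilt (fincostd Q) hZ
      obtain ⟨Y', f', g', b, h1, h2, -, -⟩ := hs'.pull hs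
      refine ⟨Y', U', b, p ∘ₗ p', h2, FD.ses hs' hZf hU, ?_, ?_, ?_⟩
      · intro x hx
        rcases Finset.mem_insert.1 hx with rfl | hx
        · exact hvU'
        · refine hs'.van_mid_con ?_ (hV x hx)
          refine van_fd_costd Q hZf ?_
          intro κ hκ hlt'
          exact hν (hup x hx ν (hlt'.trans_le (HF.pow Q hκ)))
      · exact ⟨FD.ses h1 hZf hY.1, fun μ => h1.van_mid_cov ((YY.of_filt Q hZ).2 μ) (hY.2 μ)⟩
      · intro κ hκ
        rcases hκ.ses h1 with h | h
        · exact ⟨κ1, hκ1, (HF.pow Q h).trans_lt hlt⟩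
        · exact hHF κ h

theorem approx {M : ModuleCat.{0} S} (hM : FD M) :
      ∃ (Y U : ModuleCat.{0} S) (y : ↥Y →ₗ[S] ↥U) (p : ↥U →ₗ[S] ↥M), SES y p ∧ XX Q U ∧ YY Q Y ∧
      ∀ κ, HF Q κ Y → ∃ κ', HF Q κ' M ∧ κ < κ' := by
  obtain ⟨A, hA, -, Y, U, y, p, hs, hU, hV, hY, hHF⟩ := approx_aux Q hM _ le_rfl
  have : A = Finset.univ := (Finset.card_eq_iff_eq_univ A).1 hA
  exact ⟨Y, U, y, p, hs, ⟨hU, fun ν => hV ν (by rw [this]; exact Finset.mem_univ _)⟩, hY, hHF⟩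

theorem YY.retract {A U : ModuleCat.{0} S} (i : ↥A →ₗ[S] ↥U) (r : ↥U →ₗ[S] ↥A)
    (h : ∀ x, r (i x) = x) (hU : YY Q U) : YY Q A :=
  ⟨hU.1.quot (f := r) (fun x => ⟨i x, h x⟩), fun ν => Van.retract_right i r h (hU.2 ν)⟩

theorem XX.retract {A U : ModuleCat.{0} S} (i : ↥A →ₗ[S] ↥U) (r : ↥U →ₗ[S] ↥A)
    (h : ∀ x, r (i x) = x) (hU : XX Q U) : XX Q A :=
  ⟨hU.1.quot (f := r) (fun x => ⟨i x, h x⟩), fun ν => Van.retract_left i r h (hU.2 ν)⟩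

theorem tilt_cover {T : ModuleCat.{0} S} (hT : IsFullTilting S Q T) (lam : Λ) :
    ∃ p : ↥T →ₗ[S] ↥(Q.costd lam), Function.Surjective p ∧
      YY Q (ModuleCat.of S (LinearMap.ker p)) := by
  classical
  obtain ⟨Y, U, y, p, hs, hUX, hY, hHF⟩ := approx Q (fincostd Q lam)
  have hUY : YY Q U := ⟨hUX.1, fun μ => hs.van_mid_cov (hY.2 μ) (van1_std_costd Q μ lam)⟩
  have hYl : ¬ HF Q lam Y := fun h => by
    obtain ⟨κ', h1, h2⟩ := hHF _ h
    exact absurd (costd_le Q h1) (not_le_of_gt h2)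
  have hUle : ∀ κ, HF Q κ U → κ ≤ lam := fun κ h => by
    rcases h.ses hs with h | h
    · obtain ⟨κ', h1, h2⟩ := hHF _ h
      exact h2.le.trans (costd_le Q h1)
    · exact costd_le Q h
  obtain ⟨j, hj, -, hjQ⟩ := costd_soc Q lam
  have hmuU : mu Q lam U = 1 := by
    rw [mu_ses hs, mu_ses (ses_coker j hj), mu_self, mu_zero.2 hYl,
      mu_zero.2 (fun h => lt_irrefl _ (hjQ _ h))]
    simp
  -- minimal summand
  have hex : ∃ n, ∃ (A B : ModuleCat.{0} S), Nonempty (↥U ≃ₗ[S] (↥A × ↥B)) ∧ HF Q lam A ∧ len A = n := by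
    refine ⟨_, U, ModuleCat.of S PUnit, ⟨(LinearEquiv.prodUnique (M₂ := PUnit)).symm⟩, ?_, rfl⟩
    by_contra h
    rw [mu_zero.2 h] at hmuU
    exact absurd hmuU (by simp)
  obtain ⟨A, B, ⟨e⟩, hA, hAn⟩ := Nat.find_spec hex
  have hmin : ∀ (A' B' : ModuleCat.{0} S), (↥U ≃ₗ[S] (↥A' × ↥B')) → HF Q lam A' →
      len A ≤ len A' := by
    intro A' B' e' h'
    rw [hAn]
    exact Nat.find_min' hex ⟨A', B', ⟨e'⟩, h', rfl⟩
  let iA : ↥A →ₗ[S] ↥U := e.symm.toLinearMap ∘ₗ LinearMap.inl S ↥A ↥B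
  let rA : ↥U →ₗ[S] ↥A := LinearMap.fst S ↥A ↥B ∘ₗ e.toLinearMap
  have hri : ∀ x, rA (iA x) = x := fun x => by simp [iA, rA]
  have hAX := hUX.retract Q iA rA hri
  have hAY := hUY.retract Q iA rA hri
  have hmuAB : mu Q lam A + mu Q lam B = 1 := by
    rw [← mu_ses (ses_prod A B), ← hmuU]
    exact mu_congr e.symm
  have hmuA : mu Q lam A = 1 ∧ mu Q lam B = 0 := by
    have h1 : mu Q lam A ≠ 0 := fun h => mu_zero.1 h hA
    generalize mu Q lam A = a at hmuAB h1
    generalize mu Q lam B = b at hmuAB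
    have ha : a ≠ ⊤ := by rintro rfl; simp at hmuAB
    have hb : b ≠ ⊤ := by rintro rfl; simp at hmuAB
    lift a to ℕ using ha
    lift b to ℕ using hb
    norm_cast at hmuAB h1 ⊢
    omega
  have hind : IsIndecTilting S Q lam A := by
    refine ⟨⟨hAX.filt, hAY.filt⟩, ?_, ?_, mult_of_mu (devissage Q hAX.1.len) hmuA.1, ?_⟩
    · obtain ⟨u, hu⟩ := hA
      by_contra hn
      have := not_nontrivial_iff_subsingleton.1 hn
      exact hu (by ext x; exact Subsingleton.elim _ _)
    · have key : ∀ A1 A2 : Submodule S ↥A, IsCompl A1 A2 → HF Q lam (ModuleCat.of S A1) → A2 = ⊥ := by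
        intro A1 A2 hc h1
        by_contra hne
        have e1 : (A1 × A2) ≃ₗ[S] ↥A := Submodule.prodEquivOfIsCompl A1 A2 hc
        have e2 : ↥U ≃ₗ[S] (A1 × (A2 × ↥B)) :=
          (e.trans (e1.symm.prodCongr (LinearEquiv.refl S ↥B))).trans (LinearEquiv.prodAssoc S A1 A2 ↥B)
        have h2 := hmin (ModuleCat.of S A1) (ModuleCat.of S (A2 × ↥B)) e2 h1
        have h3 := len_ses ((ses_prod (ModuleCat.of S A1) (ModuleCat.of S A2)).equiv_mid
          (B' := A) e1.symm) hAX.1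
        have h4 : 0 < len (ModuleCat.of S A2) := len_pos
          (hAX.1.sub (f := A2.subtype) A2.injective_subtype) (Submodule.nontrivial_iff_ne_bot.2 hne)
        omega
      intro A1 A2 hc
      have e1 : (A1 × A2) ≃ₗ[S] ↥A := Submodule.prodEquivOfIsCompl A1 A2 hc
      rcases hA.ses ((ses_prod (ModuleCat.of S A1) (ModuleCat.of S A2)).equiv_mid
          (B' := A) e1.symm) with h | h
      · exact Or.inr (key A1 A2 hc h)
      · exact Or.inl (key A2 A1 hc.symm h)
    · intro μ hμ
      have h1 : HF Q μ A := compFactor_iff.1 hμ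
      have h2 : HF Q μ U := h1.of_inj (f := iA)
        (fun x z hxz => by rw [← hri x, hxz, hri])
      exact (hUle μ h2).eq_or_lt
  obtain ⟨C, ⟨eT⟩⟩ := hT.2.2 lam A hind
  have hB0 : ∀ b : ↥B, p (e.symm (0, b)) = 0 := by
    intro b
    have := hom_costd_zero Q (mu_zero.1 hmuA.2) (p ∘ₗ e.symm.toLinearMap ∘ₗ LinearMap.inr S ↥A ↥B)
    exact LinearMap.congr_fun this b
  have hpA : ∀ x, p (iA (rA x)) = p x := by
    intro x
    have h1 : x = e.symm ((e x).1, 0) + e.symm (0, (e x).2) := by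
      rw [← map_add]; simp
    have h2 : p x = p (e.symm ((e x).1, 0)) := by
      conv_lhs => rw [h1]
      rw [map_add, hB0, add_zero]
    rw [h2]; rfl
  let pT : ↥T →ₗ[S] ↥(Q.costd lam) := (p ∘ₗ iA) ∘ₗ LinearMap.fst S ↥A ↥C ∘ₗ eT.toLinearMap
  have hlift : ∀ x : ↥U, pT (eT.symm (rA x, 0)) = p x := by
    intro x
    simp only [pT, LinearMap.comp_apply, LinearEquiv.coe_coe, LinearEquiv.apply_symm_apply,
      LinearMap.fst_apply]
    exact hpA x
  have hsurj : Function.Surjective pT := by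
    intro c
    obtain ⟨x, rfl⟩ := hs.surj c
    exact ⟨_, hlift x⟩
  have hTY : YY Q T := YY.of_filt Q hT.1.2
  have hsT := ses_ker pT hsurj
  refine ⟨pT, hsurj, hTY.1.sub hsT.inj, fun μ => hsT.van_left_cov1 ?_ (hTY.2 μ)⟩
  intro u
  obtain ⟨v, rfl⟩ := hs.lift (hY.2 μ) u
  refine ⟨eT.symm.toLinearMap ∘ₗ LinearMap.inl S ↥A ↥C ∘ₗ rA ∘ₗ v, ?_⟩
  ext x
  exact hlift (v x)

end ApproxSec
end QHProof

open CategoryTheory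
set_option linter.unusedSectionVars false
set_option linter.style.haveILetI false
set_option linter.unusedVariables false

namespace QHProof
open QHPaper CategoryTheory.Abelian

section TiltSec
variable {S : Type} [Ring S] [FDA S] {Λ : Type} [Fintype Λ] [PartialOrder Λ] (Q : QHData S Λ)

/-- properties shared by the modules in `add T` -/
structure AT (T M : ModuleCat.{0} S) : Prop where
  fs : Filt Q.std M
  fc : Filt Q.costd M
  proj : Module.Projective (RingelDualRing S T) ↥(homTMod S T M)
  gen : ∀ (Y : ModuleCat.{0} S) (h : ↥M →ₗ[S] ↥Y), (∀ u : ↥T →ₗ[S] ↥M, h ∘ₗ u = 0) → h = 0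
  full : ∀ (Y : ModuleCat.{0} S) (Φ : ↥(homTMod S T M) →ₗ[RingelDualRing S T] ↥(homTMod S T Y)),
    ∃ h : ↥M →ₗ[S] ↥Y, Φ = Fmap T h

theorem AT.zero (T : ModuleCat.{0} S) {M : ModuleCat.{0} S} (h : Subsingleton M) : AT Q T M := by
  have hs : Subsingleton (homTMod S T M) :=
    inferInstanceAs (Subsingleton (↥T →ₗ[S] ↥M))
  refine ⟨Filt.zero h, Filt.zero h, inferInstance, ?_, ?_⟩
  · intro Y h _
    ext x
    rw [Subsingleton.elim x 0, map_zero, map_zero]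
  · intro Y Φ
    refine ⟨0, LinearMap.ext fun u => ?_⟩
    rw [Subsingleton.elim u 0, map_zero, map_zero]

theorem AT.self {T : ModuleCat.{0} S} (h1 : Filt Q.std T) (h2 : Filt Q.costd T) : AT Q T T := by
  refine ⟨h1, h2, ?_, ?_, ?_⟩
  · let e : RingelDualRing S T ≃ₗ[RingelDualRing S T] ↥(homTMod S T T) :=
      { toFun := fun a => (a.unop : ↥T →ₗ[S] ↥T)
        invFun := fun a => MulOpposite.op (a : ↥T →ₗ[S] ↥T)
        left_inv := fun _ => rfl
        right_inv := fun _ => rfl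
        map_add' := fun _ _ => rfl
        map_smul' := fun _ _ => rfl }
    exact Module.Projective.of_equiv e
  · intro Y h hu
    exact hu LinearMap.id
  · intro Y Φ
    refine ⟨Φ (LinearMap.id : ↥T →ₗ[S] ↥T), LinearMap.ext fun u => ?_⟩
    exact Φ.map_smul (MulOpposite.op (u : ↥T →ₗ[S] ↥T)) (LinearMap.id : ↥T →ₗ[S] ↥T)

theorem AT.prod {T M N : ModuleCat.{0} S} (hM : AT Q T M) (hN : AT Q T N) :
    AT Q T (ModuleCat.of S (↥M × ↥N)) := by
  refine ⟨Filt.ext (ses_prod M N) hM.fs hN.fs, Filt.ext (ses_prod M N) hM.fc hN.fc, ?_, ?_, ?_⟩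
  · haveI := hM.proj
    haveI := hN.proj
    let e : (↥(homTMod S T M) × ↥(homTMod S T N)) ≃ₗ[RingelDualRing S T]
        ↥(homTMod S T (ModuleCat.of S (↥M × ↥N))) :=
      { toFun := fun a => LinearMap.prod (a.1 : ↥T →ₗ[S] ↥M) (a.2 : ↥T →ₗ[S] ↥N)
        invFun := fun a => (LinearMap.fst S M N ∘ₗ (a : ↥T →ₗ[S] (↥M × ↥N)),
          LinearMap.snd S M N ∘ₗ (a : ↥T →ₗ[S] (↥M × ↥N)))
        left_inv := fun _ => rfl
        right_inv := fun _ => rfl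
        map_add' := fun _ _ => rfl
        map_smul' := fun _ _ => rfl }
    exact Module.Projective.of_equiv e
  · intro Y h hu
    have h1 : h ∘ₗ LinearMap.inl S M N = 0 := hM.gen Y _ (fun u => hu (LinearMap.inl S M N ∘ₗ u))
    have h2 : h ∘ₗ LinearMap.inr S M N = 0 := hN.gen Y _ (fun u => hu (LinearMap.inr S M N ∘ₗ u))
    exact LinearMap.prod_ext h1 h2
  · intro Y Φ
    obtain ⟨a, ha⟩ := hM.full Y (Φ ∘ₗ Fmap T (X := M) (Y := ModuleCat.of S (↥M × ↥N)) (LinearMap.inl S M N))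
    obtain ⟨b, hb⟩ := hN.full Y (Φ ∘ₗ Fmap T (X := N) (Y := ModuleCat.of S (↥M × ↥N)) (LinearMap.inr S M N))
    refine ⟨LinearMap.coprod a b, LinearMap.ext fun u => ?_⟩
    let u' : ↥T →ₗ[S] (↥M × ↥N) := u
    have hu : u = Fmap T (X := M) (Y := ModuleCat.of S (↥M × ↥N)) (LinearMap.inl S M N)
          (LinearMap.fst S M N ∘ₗ u' : ↥T →ₗ[S] ↥M) +
        Fmap T (X := N) (Y := ModuleCat.of S (↥M × ↥N)) (LinearMap.inr S M N)
          (LinearMap.snd S M N ∘ₗ u' : ↥T →ₗ[S] ↥N) := by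
      refine LinearMap.ext (f := u') fun x => ?_
      refine Prod.ext ?_ ?_
      · change (u' x).1 = (u' x).1 + 0
        rw [add_zero]
      · change (u' x).2 = 0 + (u' x).2
        rw [zero_add]
    have h1 := LinearMap.congr_fun ha (LinearMap.fst S M N ∘ₗ u' : ↥T →ₗ[S] ↥M)
    have h2 := LinearMap.congr_fun hb (LinearMap.snd S M N ∘ₗ u' : ↥T →ₗ[S] ↥N)
    have h3 : Φ u = a ∘ₗ (LinearMap.fst S M N ∘ₗ u') + b ∘ₗ (LinearMap.snd S M N ∘ₗ u') := by
      conv_lhs => rw [hu, map_add]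
      exact congrArg₂ (fun p q : ↥T →ₗ[S] ↥Y => p + q) h1 h2
    rw [h3]
    rfl

theorem tilt_res {T : ModuleCat.{0} S} (hT : IsFullTilting S Q T) {X : ModuleCat.{0} S}
    (hX : Filt Q.costd X) : ∃ (K T0 : ModuleCat.{0} S) (q : ↥K →ₗ[S] ↥T0) (p : ↥T0 →ₗ[S] ↥X),
      SES q p ∧ AT Q T T0 ∧ Filt Q.costd K := by
  have key : Filt Q.costd X ∧ ∃ (T0 : ModuleCat.{0} S) (p : ↥T0 →ₗ[S] ↥X), Function.Surjective p ∧
      AT Q T T0 ∧ ∀ μ, ∀ u : ↥(Q.std μ) →ₗ[S] ↥X, ∃ v : ↥(Q.std μ) →ₗ[S] ↥T0, p ∘ₗ v = u := by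
    refine hX.elim (fun X => Filt Q.costd X ∧ ∃ (T0 : ModuleCat.{0} S) (p : ↥T0 →ₗ[S] ↥X),
      Function.Surjective p ∧ AT Q T T0 ∧
      ∀ μ, ∀ u : ↥(Q.std μ) →ₗ[S] ↥X, ∃ v : ↥(Q.std μ) →ₗ[S] ↥T0, p ∘ₗ v = u) ?_ ?_
    · intro M hM
      exact ⟨Filt.zero hM, M, LinearMap.id, Function.surjective_id, AT.zero Q T hM,
        fun μ u => ⟨u, LinearMap.id_comp u⟩⟩
    · rintro i A B a b hs ⟨hA, TA, pA, hpA, hTA, hlA⟩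
      obtain ⟨pi, hpi, hYi⟩ := tilt_cover Q hT i
      obtain ⟨w, hw⟩ := hs.lift (X := T) (van_filt Q hT.1.1 hA) pi
      have hw' : ∀ x, b (w x) = pi x := fun x => LinearMap.congr_fun hw x
      refine ⟨Filt.snoc hs hA, ModuleCat.of S (↥TA × ↥T), LinearMap.coprod (a ∘ₗ pA) w, ?_,
        hTA.prod Q (AT.self Q hT.1.1 hT.1.2), ?_⟩
      · intro y
        obtain ⟨t, ht⟩ := hpi (b y)
        have h1 : b (y - w t) = 0 := by rw [map_sub, hw', ht, sub_self]
        obtain ⟨x, hx⟩ := (hs.ex _).1 h1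
        obtain ⟨s, rfl⟩ := hpA x
        refine ⟨(s, t), ?_⟩
        change a (pA s) + w t = y
        rw [hx, sub_add_cancel]
      · intro μ u
        obtain ⟨v1, hv1⟩ := (ses_ker pi hpi).lift (hYi.2 μ) (b ∘ₗ u)
        have hv1' : ∀ x, pi (v1 x) = b (u x) := fun x => LinearMap.congr_fun hv1 x
        obtain ⟨v2, hv2⟩ := hs.factor (u - w ∘ₗ v1) (fun x => by
          rw [LinearMap.sub_apply, map_sub, LinearMap.comp_apply, hw', hv1', sub_self])
        obtain ⟨v3, hv3⟩ := hlA μ v2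
        refine ⟨LinearMap.prod v3 v1, LinearMap.ext fun x => ?_⟩
        change a (pA (v3 x)) + w (v1 x) = u x
        have h1 : pA (v3 x) = v2 x := LinearMap.congr_fun hv3 x
        have h2 : a (v2 x) = u x - w (v1 x) := LinearMap.congr_fun hv2 x
        rw [h1, h2, sub_add_cancel]
  obtain ⟨-, T0, p, hp, hT0, hl⟩ := key
  have hs := ses_ker p hp
  have hY := YY.of_filt Q hT0.fc
  refine ⟨_, T0, _, p, hs, hT0, YY.filt Q ⟨hY.1.sub hs.inj, fun μ => hs.van_left_cov1 (hl μ) (hY.2 μ)⟩⟩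

/-- projective dimension at most `d`, via Ext -/
def PD {R : Type} [Ring R] (d : ℕ) (M : ModuleCat.{0} R) : Prop := ∀ Y, Van (d + 1) M Y

/-- Delta-filtration dimension at most `d`, via Ext -/
def VD (d : ℕ) (M : ModuleCat.{0} S) : Prop := ∀ ν, Van (d + 1) M (Q.costd ν)

theorem VD_iff_PD {T : ModuleCat.{0} S} (hT : IsFullTilting S Q T) (d : ℕ) :
    ∀ X : ModuleCat.{0} S, Filt Q.costd X → (VD Q d X ↔ PD d (homTMod S T X)) := by
  induction d with
  | zero =>
    intro X hX
    obtain ⟨K, T0, q, p, hs, hT0, hK⟩ := tilt_res Q hT hX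
    have hF := Fses T hs (fun u => hs.lift (van_filt Q hT.1.1 hK) u)
    have hXf : FD X := finFilt (fincostd Q) hX
    constructor
    · intro h
      have hX2 : Filt Q.std X := XX.filt Q ⟨hXf, h⟩
      obtain ⟨s, hsec⟩ := hs.lift (van_filt Q hX2 hK) LinearMap.id
      intro Y
      refine Van.retract_left (Fmap T s) (Fmap T p) ?_ (Van.of_proj hT0.proj)
      intro x
      exact congrArg (fun g => g ∘ₗ (x : ↥T →ₗ[S] ↥X)) hsec
    · intro h
      obtain ⟨s, hsec⟩ := hF.lift (h _) LinearMap.id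
      obtain ⟨ε, hε⟩ := hT0.full T0 (s ∘ₗ Fmap T p)
      obtain ⟨K1, T1, q1, p1, hs1, hT1, hK1⟩ := tilt_res Q hT hK
      have h0 : ε ∘ₗ q ∘ₗ p1 = 0 := by
        refine hT1.gen _ _ (fun u => ?_)
        have h1 := LinearMap.congr_fun hε (q ∘ₗ p1 ∘ₗ u : ↥T →ₗ[S] ↥T0)
        have h2 : Fmap T p (q ∘ₗ p1 ∘ₗ u : ↥T →ₗ[S] ↥T0) = 0 :=
          LinearMap.ext (M := ↥T) fun x => hs.comp_zero _
        have h3 := (congrArg s h2).trans (map_zero s)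
        exact h1.symm.trans h3
      obtain ⟨σ, hσ⟩ := hs.desc ε (fun x => by
        obtain ⟨y, rfl⟩ := hs1.surj x
        exact LinearMap.congr_fun h0 y)
      have h3 : (p ∘ₗ σ - LinearMap.id) ∘ₗ p = 0 := by
        refine hT0.gen _ _ (fun u => LinearMap.ext fun x => ?_)
        have h1 := LinearMap.congr_fun hε u
        have h2 := LinearMap.congr_fun hsec (Fmap T p u)
        have h4 : Fmap T p (Fmap T ε u) = Fmap T p u := by
          rw [← h1]; exact h2
        have h5 : p (ε (u x)) = p (u x) := LinearMap.congr_fun (f := p ∘ₗ ε ∘ₗ u) (g := p ∘ₗ u) h4 x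
        change p (σ (p (u x))) - p (u x) = 0
        rw [← LinearMap.comp_apply σ p, hσ, h5, sub_self]
      intro ν
      refine Van.retract_left σ p ?_ (van_filt Q hT0.fs (Filt.single _ _))
      intro x
      obtain ⟨y, rfl⟩ := hs.surj x
      exact sub_eq_zero.1 (LinearMap.congr_fun h3 y)
  | succ d ih =>
    intro X hX
    obtain ⟨K, T0, q, p, hs, hT0, hK⟩ := tilt_res Q hT hX
    have hF := Fses T hs (fun u => hs.lift (van_filt Q hT.1.1 hK) u)
    have h1 : VD Q (d + 1) X ↔ VD Q d K :=
      ⟨fun h ν => hs.van_left_con (van_filt Q hT0.fs (Filt.single _ _)) (h ν),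
       fun h ν => hs.van_right_con (h ν) (van_filt Q hT0.fs (Filt.single _ _))⟩
    have h2 : PD (d + 1) (homTMod S T X) ↔ PD d (homTMod S T K) :=
      ⟨fun h Y => hF.van_left_con (Van.of_proj hT0.proj) (h Y),
       fun h Y => hF.van_right_con (h Y) (Van.of_proj hT0.proj)⟩
    rw [h1, h2, ih K hK]

end TiltSec

section ResSec
variable {R : Type} [Ring R]

/-- recursive resolutions -/
def Res (C : ModuleCat.{0} R → Prop) : ℕ → ModuleCat.{0} R → Prop
  | 0, X => C X
  | d + 1, X => ∃ (K M : ModuleCat.{0} R) (q : ↥K →ₗ[R] ↥M) (p : ↥M →ₗ[R] ↥X),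
      SES q p ∧ C M ∧ Res C d K

theorem Res.of_equiv {C : ModuleCat.{0} R → Prop}
    (hC : ∀ A B : ModuleCat.{0} R, (↥A ≃ₗ[R] ↥B) → C A → C B) {d : ℕ} {X Y : ModuleCat.{0} R}
    (e : ↥X ≃ₗ[R] ↥Y) (h : Res C d X) : Res C d Y := by
  cases d with
  | zero => exact hC _ _ e h
  | succ d =>
    obtain ⟨K, M, q, p, hs, h1, h2⟩ := h
    exact ⟨K, M, q, _, hs.equiv_right e, h1, h2⟩

/-- explicit resolutions -/
def ResLE (C : ModuleCat.{0} R → Prop) (M : ModuleCat.{0} R) (d : ℕ) : Prop :=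
  ∃ (N : Fin (d + 2) → ModuleCat.{0} R)
    (f : ∀ i : Fin (d + 1), ↥(N i.castSucc) →ₗ[R] ↥(N i.succ)),
    IsExactSeq R d N f ∧ N (Fin.last (d + 1)) = M ∧
    ∀ i : Fin (d + 1), C (N i.castSucc)

theorem ResLE.res {C : ModuleCat.{0} R → Prop}
    (hC : ∀ A B : ModuleCat.{0} R, (↥A ≃ₗ[R] ↥B) → C A → C B) {d : ℕ} {X : ModuleCat.{0} R}
    (h : ResLE C X d) : Res C d X := by
  obtain ⟨N, f, ⟨hi, hsj, hex⟩, rfl, hN⟩ := h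
  have key : ∀ (j : ℕ) (hj : j < d + 1),
      Res C j (ModuleCat.of R (LinearMap.range (f ⟨j, hj⟩))) := by
    intro j
    induction j with
    | zero =>
      intro hj
      exact hC (N (Fin.castSucc 0)) _ (LinearEquiv.ofInjective (f 0) hi) (hN 0)
    | succ j ih =>
      intro hj
      refine ⟨_, N (Fin.castSucc ⟨j + 1, hj⟩), (LinearMap.range (f ⟨j, by omega⟩)).subtype,
        (f ⟨j + 1, hj⟩).rangeRestrict, ⟨Submodule.injective_subtype _,
          LinearMap.surjective_rangeRestrict _, ?_⟩, hN _, ih (by omega)⟩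
      intro x
      have h1 := hex ⟨j, by omega⟩
      have h2 : x ∈ LinearMap.ker (f ⟨j + 1, hj⟩) ↔ x ∈ LinearMap.range (f ⟨j, by omega⟩) := by
        rw [Submodule.ext_iff] at h1
        exact (h1 x).symm
      constructor
      · intro h
        exact ⟨⟨x, h2.1 (congrArg Subtype.val h)⟩, rfl⟩
      · rintro ⟨y, rfl⟩
        exact Subtype.ext (h2.2 y.2)
  have h := key d (by omega)
  refine h.of_equiv hC (LinearEquiv.ofTop _ (LinearMap.range_eq_top.2 hsj))

end ResSec
end QHProof

open CategoryTheory
set_option linter.unusedSectionVars false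
set_option linter.style.haveILetI false
set_option linter.unusedVariables false

namespace QHProof
open QHPaper CategoryTheory.Abelian

section ResSec2
variable {R : Type} [Ring R]

/-- left-recursive exact sequences -/
def GR (C : ModuleCat.{0} R → Prop) : ℕ → ModuleCat.{0} R → ModuleCat.{0} R → Prop
  | 0, A, X => Nonempty (↥A ≃ₗ[R] ↥X)
  | d + 1, A, X => ∃ (B M : ModuleCat.{0} R) (q : ↥A →ₗ[R] ↥M) (p : ↥M →ₗ[R] ↥B),
      SES q p ∧ C M ∧ GR C d B X

theorem GR.snoc {C : ModuleCat.{0} R → Prop} {K M X : ModuleCat.{0} R} {q : ↥K →ₗ[R] ↥M}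
    {p : ↥M →ₗ[R] ↥X} (hs : SES q p) (hM : C M) (d : ℕ) :
    ∀ A, GR C d A K → GR C (d + 1) A X := by
  induction d with
  | zero =>
    rintro A ⟨e⟩
    exact ⟨X, M, _, p, hs.equiv_left e, hM, ⟨LinearEquiv.refl R _⟩⟩
  | succ d ih =>
    rintro A ⟨B, M', q', p', hs', hM', h⟩
    exact ⟨B, M', q', p', hs', hM', ih B h⟩

theorem Res.gr {C : ModuleCat.{0} R → Prop} (d : ℕ) :
    ∀ X, Res C d X → ∃ A, C A ∧ GR C d A X := by
  induction d with
  | zero => intro X h; exact ⟨X, h, ⟨LinearEquiv.refl R _⟩⟩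
  | succ d ih =>
    rintro X ⟨K, M, q, p, hs, hM, h⟩
    obtain ⟨A, hA, hG⟩ := ih K h
    exact ⟨A, hA, GR.snoc hs hM d A hG⟩

/-- the spliced sequence of modules -/
def spN (A M : ModuleCat.{0} R) (N : ℕ → ModuleCat.{0} R) : ℕ → ModuleCat.{0} R
  | 0 => A
  | 1 => M
  | n + 2 => N (n + 1)

/-- the spliced sequence of maps -/
def spf {A M : ModuleCat.{0} R} {N : ℕ → ModuleCat.{0} R} (q : ↥A →ₗ[R] ↥M) (p : ↥M →ₗ[R] ↥(N 0))
    (f : ∀ i, ↥(N i) →ₗ[R] ↥(N (i + 1))) : ∀ i, ↥(spN A M N i) →ₗ[R] ↥(spN A M N (i + 1))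
  | 0 => q
  | 1 => f 0 ∘ₗ p
  | n + 2 => f (n + 1)

theorem GR.exact {C : ModuleCat.{0} R → Prop} (d : ℕ) :
    ∀ A X, GR C d A X → ∃ (N : ℕ → ModuleCat.{0} R) (f : ∀ i, ↥(N i) →ₗ[R] ↥(N (i + 1))),
      N 0 = A ∧ N (d + 1) = X ∧ Function.Injective (f 0) ∧ Function.Surjective (f d) ∧
      (∀ i, i < d → LinearMap.range (f i) = LinearMap.ker (f (i + 1))) ∧
      ∀ i, i < d → C (N (i + 1)) := by
  induction d with
  | zero =>
    rintro A X ⟨e⟩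
    exact ⟨spN A X (fun _ => X), spf (N := fun _ => X) e.toLinearMap LinearMap.id
        (fun _ => LinearMap.id), rfl, rfl, e.injective, e.surjective, fun i hi => absurd hi (by omega),
      fun i hi => absurd hi (by omega)⟩
  | succ d ih =>
    rintro A X ⟨B, M, q, p, hs, hM, h⟩
    obtain ⟨N, f, rfl, rfl, hi, hsj, hex, hN⟩ := ih B X h
    refine ⟨spN A M N, spf q p f, rfl, rfl, hs.inj, ?_, ?_, ?_⟩
    · cases d with
      | zero => exact hsj.comp hs.surj
      | succ d => exact hsj
    · intro i hid
      match i, hid with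
      | 0, _ =>
        refine Submodule.ext fun (x : ↥M) => ?_
        change (∃ y, q y = x) ↔ f 0 (p x) = 0
        rw [← hs.ex, map_eq_zero_iff _ hi]
      | 1, h1 =>
        have h2 := hex 0 (by omega)
        change LinearMap.range (f 0 ∘ₗ p) = LinearMap.ker (f 1)
        rw [LinearMap.range_comp, LinearMap.range_eq_top.2 hs.surj, Submodule.map_top, h2]
      | n + 2, h1 => exact hex (n + 1) (by omega)
    · intro i hid
      match i, hid with
      | 0, _ => exact hM
      | n + 1, h1 => exact hN n (by omega)

theorem Res.le {C : ModuleCat.{0} R → Prop} {d : ℕ} {X : ModuleCat.{0} R} (h : Res C d X) :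
    ResLE C X d := by
  obtain ⟨A, hA, hG⟩ := Res.gr d X h
  obtain ⟨N, f, rfl, rfl, hi, hsj, hex, hN⟩ := hG.exact
  refine ⟨fun i => N i.val, fun i => f i.val, ⟨hi, hsj, fun i => hex i.val i.2⟩, rfl, ?_⟩
  rintro ⟨i, hid⟩
  cases i with
  | zero => exact hA
  | succ i => exact hN i (by omega)

theorem projdim_iff (d : ℕ) (X : ModuleCat.{0} R) : ProjdimLE R X d ↔ PD d X := by
  constructor
  · intro h
    have h1 : Res (fun M : ModuleCat.{0} R => Module.Projective R ↥M) d X :=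
      ResLE.res (fun A B e h => by
        haveI : Module.Projective R ↥A := h
        exact Module.Projective.of_equiv e) h
    clear h
    induction d generalizing X with
    | zero => exact fun Y => Van.of_proj h1
    | succ d ih =>
      obtain ⟨K, M, q, p, hs, hM, h2⟩ := h1
      exact fun Y => hs.van_right_con (ih K h2 Y) (Van.of_proj hM)
  · intro h
    have h1 : Res (fun M : ModuleCat.{0} R => Module.Projective R ↥M) d X := by
      induction d generalizing X with
      | zero => exact proj_of_van h
      | succ d ih =>
        have hsur : Function.Surjective (Finsupp.linearCombination R (id : ↥X → ↥X)) :=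
          Finsupp.linearCombination_id_surjective R ↥X
        have hs := ses_ker (M := ModuleCat.of R (↥X →₀ R)) (N := X) _ hsur
        have hP : Module.Projective R (↥X →₀ R) := inferInstance
        refine ⟨_, _, _, _, hs, hP, ih _ ?_⟩
        exact fun Y => hs.van_left_con (Van.of_proj hP) (h Y)
    exact h1.le

end ResSec2

section FinalSec
variable {S : Type} [Ring S] [FDA S] {Λ : Type} [Fintype Λ] [PartialOrder Λ] (Q : QHData S Λ)

theorem wfd_iff {T : ModuleCat.{0} S} (hT : IsFullTilting S Q T) (d : ℕ) (X : ModuleCat.{0} S)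
    (hX : Filt Q.costd X) : WfdLE S Q X d ↔ VD Q d X := by
  constructor
  · intro h
    have h1 : Res (fun M : ModuleCat.{0} S => Filt Q.std M) d X :=
      ResLE.res (fun A B e h => h.of_equiv e) h
    clear h hX
    induction d generalizing X with
    | zero => exact fun ν => van_filt Q h1 (Filt.single _ _)
    | succ d ih =>
      obtain ⟨K, M, q, p, hs, hM, h2⟩ := h1
      exact fun ν => hs.van_right_con (ih K h2 ν) (van_filt Q hM (Filt.single _ _))
  · intro h
    have h1 : Res (fun M : ModuleCat.{0} S => Filt Q.std M) d X := by
      induction d generalizing X with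
      | zero => exact XX.filt Q ⟨finFilt (fincostd Q) hX, h⟩
      | succ d ih =>
        obtain ⟨K, T0, q, p, hs, hT0, hK⟩ := tilt_res Q hT hX
        refine ⟨K, T0, q, p, hs, hT0.fs, ih K hK ?_⟩
        exact fun ν => hs.van_left_con (van_filt Q hT0.fs (Filt.single _ _)) (h ν)
    exact h1.le

theorem final {T : ModuleCat.{0} S} (hT : IsFullTilting S Q T) (lam : Λ) :
    wfd S Q (Q.costd lam) = projdim (RingelDualRing S T) (homTMod S T (Q.costd lam)) := by
  unfold wfd projdim
  congr 1
  ext d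
  have h := Filt.single Q.costd lam
  exact (wfd_iff Q hT d _ h).trans ((VD_iff_PD Q hT d _ h).trans (projdim_iff d _).symm)

end FinalSec
end QHProof

open QHPaper in
/-- Let `S` be a quasi-hereditary algebra with Ringel dual
`S' = End_S(T)^op` for a full tilting module `T`. For every `lam ∈ Λ⁺`, the
Δ-filtration dimension of the costandard module `∇(lam)` of `S` equals the projective
dimension of the standard module `Δ'(lam) = Hom_S(T, ∇(lam))` of `S'`. -/
theorem stmt5 (k S Λ : Type) [Field k] [Ring S] [Algebra k S] [FiniteDimensional k S]
    [Fintype Λ] [PartialOrder Λ]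
    (QH : QHData S Λ) (T : ModuleCat.{0} S) (hT : IsFullTilting S QH T) (lam : Λ) :
    wfd S QH (QH.costd lam) = projdim (RingelDualRing S T) (homTMod S T (QH.costd lam)) := by
  haveI : QHProof.FDA S := ⟨⟨k, inferInstance, inferInstance, inferInstance⟩⟩
  exact QHProof.final QH hT lam
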